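/- Let G be a bipartite simple graph on v ≥ 4 vertices that is almost planar. Then G has at most 3v − 8 edges. -/

import Mathlib

/-!
The proof has a topological part, which replaces the drawing by a combinatorial plane map, and a
counting part on that map.

**From a drawing to a plane map.** Mathlib has neither the Jordan curve theorem nor Euler's formula
for drawings, so the map is obtained from a fine square grid. The drawing is cut into disjoint
compact connected pieces: a star around each vertex, and a core for each uncrossed edge and for
each pair of crossing edges. Consecutive pieces are joined by short arcs, one for each dart
(oriented edge). A crossing between two edges with a common endpoint is swallowed by the star of
that endpoint, so such edges count as uncrossed. On a sufficiently fine grid the cells met by these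
pieces are still disjoint and connected (`plane_map`), and the pieces can be enlarged until they
partition the grid (`growth`). Contracting every grid edge inside a part, and deleting every other
grid edge except one for each dart, keeps a rotation system and an Euler inequality
(`MinorState.delete`, `MinorState.contract`, `MinorState.reduce`). The result (`exists_planeMap`)
is a plane bipartite map between the vertices and the set `K` of cores, with one edge for each dart
of `G`, satisfying `|darts| + 2 ≤ |faces| + |V| + |K|`.

**Counting.** Suppose that every degree is at least 4. A dart gets weight 6 if its edge is
uncrossed, 12 if the face on its chosen side turns at the crossing towards an end of the opposite
colour, and 9 otherwise. By bipartiteness and simplicity every face has weight at least 18, and a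
face with `k` darts has weight at least `18 + k` unless it is a digon of one of two special types
(`CrossMap.face_weight`). If only the special digons occur around a vertex, the darts there are
cyclically uncrossed, bichromatic, monochromatic, so the degree is a multiple of 3, hence at least 6
(`CrossMap.six_le_deg`). Together with Euler's inequality this gives `10 m + 72 ≤ 30 n`
(`CrossMap.bound`), so `m ≤ 3 n - 8`.

**Induction.** A vertex of degree at most 3 is deleted, which lowers `3 n - 8` by 3; for `n = 4` a
bipartite graph has at most 4 edges (`edgeFinset_bound`).
-/


open Set

/-- A drawing of a simple graph `G` in the plane: an injective placement of vertices
together with, for each edge, a continuous injective curve between the points of its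
endpoints, whose interior avoids all vertex points; any two distinct edge curves meet in
finitely many points, and no point lies in the interiors of three distinct edge curves. -/
structure Drawing {V : Type*} (G : SimpleGraph V) where
  pos : V → ℝ × ℝ
  pos_inj : Function.Injective pos
  curve : G.edgeSet → ℝ → ℝ × ℝ
  curve_cont : ∀ e, ContinuousOn (curve e) (Icc 0 1)
  curve_inj : ∀ e, InjOn (curve e) (Icc 0 1)
  curve_ends : ∀ e : G.edgeSet, ∃ a b : V, (e : Sym2 V) = s(a, b) ∧
      curve e 0 = pos a ∧ curve e 1 = pos b
  interior_no_vertex : ∀ e, ∀ t ∈ Ioo (0 : ℝ) 1, ∀ v, curve e t ≠ pos v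
  finite_meet : ∀ e f, e ≠ f → (curve e '' Icc 0 1 ∩ curve f '' Icc 0 1).Finite
  no_triple_point : ∀ p : ℝ × ℝ, ∀ e f g, e ≠ f → e ≠ g → f ≠ g →
      p ∈ curve e '' Ioo 0 1 → p ∈ curve f '' Ioo 0 1 → p ∈ curve g '' Ioo 0 1 → False

/-- Two edges cross in a drawing if some point lies in the interiors of both curves. -/
def Drawing.Crosses {V : Type*} {G : SimpleGraph V} (D : Drawing G) (e f : G.edgeSet) : Prop :=
  e ≠ f ∧ ∃ p : ℝ × ℝ, p ∈ D.curve e '' Ioo 0 1 ∧ p ∈ D.curve f '' Ioo 0 1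

/-- A drawing is almost planar (1-planar) if every edge crosses at most one other edge. -/
def Drawing.IsAlmostPlanar {V : Type*} {G : SimpleGraph V} (D : Drawing G) : Prop :=
  ∀ e f g, D.Crosses e f → D.Crosses e g → f = g

/-- A graph is almost planar if it admits a drawing in which every edge crosses at most
one other edge. -/
def SimpleGraph.AlmostPlanar {V : Type*} (G : SimpleGraph V) : Prop :=
  ∃ D : Drawing G, D.IsAlmostPlanar

/-! ### Rotation systems with face labels -/

/-- A rotation system on the finite set `L` of live darts, with face labels. The permutation `σ`
sends a dart to the next one (counterclockwise) at the same vertex `ver`, and acts transitively on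
the darts of a vertex; `trans` states this as an induction principle for `σ`-invariant predicates.
`lft` and `rgt` are the faces on the two sides of a dart, and `lab` says that the sector between
consecutive darts lies in a single face. Dead darts are fixed by `σ`. -/
structure Rot {D W F : Type*} (L : Finset D) (σ : Equiv.Perm D) (ver : D → W)
    (lft rgt : D → F) : Prop where
  fix : ∀ d, d ∉ L → σ d = d
  ver_eq : ∀ d ∈ L, ver (σ d) = ver d
  trans : ∀ a ∈ L, ∀ b ∈ L, ver a = ver b →
    ∀ P : D → Prop, (∀ x ∈ L, P x → P (σ x)) → P a → P b
  lab : ∀ d ∈ L, rgt (σ d) = lft d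

theorem Rot.mem {D W F : Type*} {L : Finset D} {σ : Equiv.Perm D} {ver : D → W}
    {lft rgt : D → F} (h : Rot L σ ver lft rgt) {d : D} (hd : d ∈ L) : σ d ∈ L := by
  by_contra hn
  have := σ.injective (h.fix _ hn)
  rw [this] at hn
  exact hn hd

theorem Rot.mem_symm {D W F : Type*} {L : Finset D} {σ : Equiv.Perm D} {ver : D → W}
    {lft rgt : D → F} (h : Rot L σ ver lft rgt) {d : D} (hd : d ∈ L) : σ.symm d ∈ L := by
  by_contra hn
  have := h.fix _ hn
  rw [Equiv.apply_symm_apply] at this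
  rw [← this] at hn
  exact hn hd

theorem Rot.congr {D W F F' : Type*} {L : Finset D} {σ : Equiv.Perm D} {ver : D → W}
    {lft rgt : D → F} (h : Rot L σ ver lft rgt) {lft' rgt' : D → F'} (g : F → F')
    (h1 : ∀ d ∈ L, lft' d = g (lft d)) (h2 : ∀ d ∈ L, rgt' d = g (rgt d)) :
    Rot L σ ver lft' rgt' :=
  ⟨h.fix, h.ver_eq, h.trans, fun d hd => by
    rw [h1 d hd, h2 _ (h.mem hd), h.lab d hd]⟩

/-- A dart can be removed from its rotation as soon as both of its sides carry the same label. -/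
theorem Rot.erase {D W F : Type*} [DecidableEq D] {L : Finset D} {σ : Equiv.Perm D} {ver : D → W}
    {lft rgt : D → F} (h : Rot L σ ver lft rgt) {d : D} (hl : lft d = rgt d) (hd : d ∈ L) :
    Rot (L.erase d) (Equiv.swap d (σ d) * σ) ver lft rgt := by
  set σ' := Equiv.swap d (σ d) * σ with hσ'
  have e1 : σ' d = d := by simp [hσ']
  have e2 : ∀ x, σ x = d → σ' x = σ d := by
    intro x hx; simp [hσ', hx]
  have e3 : ∀ x, x ≠ d → σ x ≠ d → σ' x = σ x := by
    intro x hx hx'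
    simp only [hσ', Equiv.Perm.mul_apply]
    exact Equiv.swap_apply_of_ne_of_ne hx' (fun hh => hx (σ.injective hh))
  refine ⟨?_, ?_, ?_, ?_⟩
  · intro x hx
    by_cases hxd : x = d
    · rw [hxd, e1]
    have hxL : x ∉ L := fun hh => hx (Finset.mem_erase.2 ⟨hxd, hh⟩)
    have := h.fix x hxL
    rw [e3 x hxd (by rw [this]; exact hxd), this]
  · intro x hx
    obtain ⟨hxd, hxL⟩ := Finset.mem_erase.1 hx
    by_cases hx' : σ x = d
    · rw [e2 x hx', h.ver_eq d hd, ← h.ver_eq x hxL, hx']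
    · rw [e3 x hxd hx', h.ver_eq x hxL]
  · intro a ha b hb hab P hP hPa
    obtain ⟨had, haL⟩ := Finset.mem_erase.1 ha
    obtain ⟨hbd, hbL⟩ := Finset.mem_erase.1 hb
    have key := h.trans a haL b hbL hab (fun x => if x = d then P (σ d) else P x) (by
      intro x hx hPx
      by_cases hxd : x = d
      · subst hxd
        simp only [if_true] at hPx
        by_cases hs : σ x = x
        · simp only [hs, if_true]; rw [hs] at hPx; exact hPx
        · simp only [hs, if_false]; exact hPx
      · simp only [hxd, if_false] at hPx
        have h2 := hP x (Finset.mem_erase.2 ⟨hxd, hx⟩) hPx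
        by_cases hs : σ x = d
        · simp only [hs, if_true]; rwa [e2 x hs] at h2
        · simp only [hs, if_false]; rwa [e3 x hxd hs] at h2)
    simp only [had, hbd, if_false] at key
    exact key hPa
  · intro x hx
    obtain ⟨hxd, hxL⟩ := Finset.mem_erase.1 hx
    by_cases hx' : σ x = d
    · rw [e2 x hx', h.lab d hd, hl, ← hx', h.lab x hxL]
    · rw [e3 x hxd hx', h.lab x hxL]

/-- The first half of contracting the edge with darts `d`, `d'`: the rotations at its two ends are
spliced into one cycle and the ends identified. Afterwards `d` and `d'` have equal labels on both
sides, so `Rot.erase` can remove them. -/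
theorem Rot.merge {D W F : Type*} [DecidableEq D] [DecidableEq W] {L : Finset D}
    {σ : Equiv.Perm D} {ver : D → W}
    {lft rgt : D → F} (h : Rot L σ ver lft rgt) {d d' : D} (hd : d ∈ L) (hd' : d' ∈ L)
    (hv : ver d ≠ ver d') (h1 : lft d = rgt d') (h2 : lft d' = rgt d) :
    Rot L (Equiv.swap d d' * σ) (fun x => if ver x = ver d' then ver d else ver x) lft
      (fun x => if x = d ∨ x = d' then lft x else rgt x) := by
  set σ' := Equiv.swap d d' * σ with hσ'
  have e1 : ∀ x, σ x = d → σ' x = d' := by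
    intro x hx; simp [hσ', hx]
  have e2 : ∀ x, σ x = d' → σ' x = d := by
    intro x hx; simp [hσ', hx]
  have e3 : ∀ x, σ x ≠ d → σ x ≠ d' → σ' x = σ x := by
    intro x hx hx'
    simp only [hσ', Equiv.Perm.mul_apply]
    exact Equiv.swap_apply_of_ne_of_ne hx hx'
  refine ⟨?_, ?_, ?_, ?_⟩
  · intro x hx
    have := h.fix x hx
    rw [e3 x (by rw [this]; rintro rfl; exact hx hd) (by rw [this]; rintro rfl; exact hx hd'), this]
  · intro x hx
    have hvx := h.ver_eq x hx
    by_cases a1 : σ x = d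
    · rw [e1 x a1]; rw [a1] at hvx; simp [← hvx]
    by_cases a2 : σ x = d'
    · rw [e2 x a2]; rw [a2] at hvx; simp [← hvx]
    · rw [e3 x a1 a2, hvx]
  · intro a ha b hb hab P hP hPa
    -- from either vertex the cycle of `σ'` passes to the other one
    have toOther : ∀ u u', u ∈ L → u' ∈ L → ver u ≠ ver u' →
        (∀ x, σ x = u → σ' x = u') → (∀ x, σ x ≠ u → σ x ≠ u' → σ' x = σ x) →
        ∀ a ∈ L, ver a = ver u → P a → P u' := by
      intro u u' hu hu' hne f1 f3 a ha hau hPa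
      have := h.trans a ha (σ.symm u) (h.mem_symm hu) (by
        rw [hau, ← h.ver_eq _ (h.mem_symm hu), Equiv.apply_symm_apply])
        (fun x => ver x = ver u ∧ (P x ∨ P u')) (by
          rintro x hx ⟨hxu, hxP⟩
          refine ⟨(h.ver_eq x hx).trans hxu, ?_⟩
          rcases hxP with hxP | hxP
          · by_cases a1 : σ x = u
            · right; have := hP x hx hxP; rwa [f1 x a1] at this
            · have a2 : σ x ≠ u' := by
                intro hh; apply hne; rw [← hxu, ← h.ver_eq x hx, hh]
              left; have := hP x hx hxP; rwa [f3 x a1 a2] at this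
          · right; exact hxP) ⟨hau, Or.inl hPa⟩
      rcases this.2 with h3 | h3
      · have := hP _ (h.mem_symm hu) h3
        rwa [f1 _ (by simp)] at this
      · exact h3
    have toAll : ∀ u u', u ∈ L → ver u ≠ ver u' →
        (∀ x, σ x ≠ u → σ x ≠ u' → σ' x = σ x) → P u →
        ∀ b ∈ L, ver b = ver u → P b := by
      intro u u' hu hne f3 hPu b hb hbu
      refine (h.trans u hu b hb hbu.symm (fun x => ver x = ver u ∧ P x) ?_ ⟨rfl, hPu⟩).2
      rintro x hx ⟨hxu, hxP⟩
      refine ⟨(h.ver_eq x hx).trans hxu, ?_⟩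
      by_cases a1 : σ x = u
      · rw [a1]; exact hPu
      · have a2 : σ x ≠ u' := by
          intro hh; apply hne; rw [← hxu, ← h.ver_eq x hx, hh]
        have := hP x hx hxP; rwa [f3 x a1 a2] at this
    have both : ∀ u u', u ∈ L → u' ∈ L → ver u ≠ ver u' →
        (∀ x, σ x = u → σ' x = u') → (∀ x, σ x = u' → σ' x = u) →
        (∀ x, σ x ≠ u → σ x ≠ u' → σ' x = σ x) →
        ∀ a ∈ L, ver a = ver u → P a → P u ∧ P u' := by
      intro u u' hu hu' hne f1 f2 f3 a ha hau hPa
      have hq := toOther u u' hu hu' hne f1 f3 a ha hau hPa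
      exact ⟨toOther u' u hu' hu hne.symm f2 (fun x p q => f3 x q p) u' hu' rfl hq, hq⟩
    have e3' : ∀ x, σ x ≠ d' → σ x ≠ d → σ' x = σ x := fun x p q => e3 x q p
    by_cases hc : ver a = ver d ∨ ver a = ver d'
    · have hPd : P d ∧ P d' := by
        rcases hc with hc | hc
        · exact both d d' hd hd' hv e1 e2 e3 a ha hc hPa
        · exact (both d' d hd' hd hv.symm e2 e1 e3' a ha hc hPa).symm
      have hbc : ver b = ver d ∨ ver b = ver d' := by
        by_contra hbn
        push Not at hbn
        rcases hc with hc | hc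
        · simp [hc, hv, hbn.2] at hab; exact hbn.1 hab.symm
        · simp [hc, hbn.2] at hab; exact hbn.1 hab.symm
      rcases hbc with hbc | hbc
      · exact toAll d d' hd hv e3 hPd.1 b hb hbc
      · exact toAll d' d hd' hv.symm e3' hPd.2 b hb hbc
    · push Not at hc
      have hab' : ver a = ver b := by
        simp only [hc.2, if_false] at hab
        by_cases hb' : ver b = ver d'
        · simp only [hb', if_true] at hab; exact absurd hab hc.1
        · simpa [hb'] using hab
      refine (h.trans a ha b hb hab' (fun x => ver x = ver a ∧ P x) ?_ ⟨rfl, hPa⟩).2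
      rintro x hx ⟨hxu, hxP⟩
      have hvx := (h.ver_eq x hx).trans hxu
      refine ⟨hvx, ?_⟩
      have := hP x hx hxP
      rwa [e3 x (by rintro hh; exact hc.1 (by rw [← hvx, hh]))
        (by rintro hh; exact hc.2 (by rw [← hvx, hh]))] at this
  · intro x hx
    have hl := h.lab x hx
    by_cases a1 : σ x = d
    · rw [e1 x a1]; simp only [or_true, if_true]; rw [h2, ← a1, hl]
    by_cases a2 : σ x = d'
    · rw [e2 x a2]; simp only [true_or, if_true]; rw [h1, ← a2, hl]
    · rw [e3 x a1 a2]; simp only [a1, a2, or_self, if_false]; exact hl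

/-! ### Deleting and contracting edges -/

/-- The state of a host map while it is reduced to a minor. The host has darts `D` with reversal
`τ`, source `src` and left face `lab`; vertices and faces are both indexed by `W`. The map `q`
prescribes which vertices may be identified. In the current map `L` is the set of live darts, `σ`
the rotation, and `c`, `f` send vertices and faces of the host to representatives of their current
classes. The darts in the seam `Z` carry the same face on both sides and are not counted as edges.
`conn` says that the dual graph is connected, `count` is Euler's inequality
`|E| + 2 ≤ |V| + |F|` (doubled), `fine` says that only vertices with equal `q` have been
identified, and `done` that a removed dart within a class of `q` has identified its ends. -/
structure MinorState {D W I : Type*} [Fintype D] [DecidableEq D] [Fintype W] [DecidableEq W]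
    (τ : D → D) (src lab : D → W) (Z : Finset D) (q : W → I)
    (L : Finset D) (σ : Equiv.Perm D) (c f : W → W) : Prop where
  rot : Rot L σ (fun d => c (src d)) (fun d => f (lab d)) (fun d => f (lab (τ d)))
  inv : ∀ d ∈ L, τ d ∈ L
  conn : ∀ P : W → Prop, (∀ d ∈ L, P (f (lab d)) → P (f (lab (τ d)))) →
    ∀ x y, P (f x) → P (f y)
  count : (L \ Z).card + 4 ≤ 2 * ((Finset.univ.image c).card + (Finset.univ.image f).card)
  seam : ∀ d ∈ L, d ∈ Z → f (lab d) = f (lab (τ d))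
  fine : ∀ w w', c w = c w' → q w = q w'
  done : ∀ d, d ∉ L → d ∉ Z → q (src d) = q (src (τ d)) → c (src d) = c (src (τ d))

/-- Identifying two values of a function lowers the size of its image by at most one. -/
theorem card_image_collapse {W : Type*} [Fintype W] [DecidableEq W] (f : W → W) (l r : W) :
    (Finset.univ.image f).card ≤
      (Finset.univ.image (fun x => if f x = r then l else f x)).card + 1 := by
  refine (Finset.card_le_card ?_).trans (Finset.card_insert_le r _)
  intro y hy
  obtain ⟨x, -, rfl⟩ := Finset.mem_image.1 hy
  by_cases hx : f x = r
  · simp [hx]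
  · refine Finset.mem_insert_of_mem (Finset.mem_image.2 ⟨x, Finset.mem_univ _, ?_⟩)
    simp [hx]

theorem card_erase_erase {D : Type*} [DecidableEq D] {L Z : Finset D} {d d' : D}
    (hd : d ∈ L) (hd' : d' ∈ L) (hne : d' ≠ d) (hZ : d ∉ Z) (hZ' : d' ∉ Z) :
    (L \ Z).card = (((L.erase d).erase d') \ Z).card + 2 := by
  have : ((L.erase d).erase d') \ Z = ((L \ Z).erase d).erase d' := by
    ext x; simp only [Finset.mem_sdiff, Finset.mem_erase]; tauto
  rw [this]
  have h1 : d ∈ L \ Z := by simp [hd, hZ]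
  have h2 : d' ∈ (L \ Z).erase d := by simp [hd', hZ', hne]
  have := Finset.card_erase_add_one h1
  have := Finset.card_erase_add_one h2
  omega

section
variable {D W I : Type*} [Fintype D] [DecidableEq D] [Fintype W] [DecidableEq W]
    {τ : D → D} {src lab : D → W} {Z : Finset D} {q : W → I}
    {L : Finset D} {σ : Equiv.Perm D} {c f : W → W}

/-- Deleting an edge merges the faces on its two sides. This costs one edge and at most one face,
and a seam dart costs neither. -/
theorem MinorState.delete (h : MinorState τ src lab Z q L σ c f)
    (hτ : ∀ d, τ (τ d) = d) (hne : ∀ d, τ d ≠ d) (hZ : ∀ d ∈ Z, τ d ∈ Z)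
    {d : D} (hd : d ∈ L)
    (hcase : d ∈ Z ∨ q (src d) ≠ q (src (τ d)) ∨ c (src d) = c (src (τ d))) :
    ∃ σ' c' f', MinorState τ src lab Z q ((L.erase d).erase (τ d)) σ' c' f' := by
  set l := f (lab d) with hl
  set r := f (lab (τ d)) with hr
  set g : W → W := fun y => if y = r then l else y with hg
  have gl : g l = l := by simp [hg]
  have gr : g r = l := by simp [hg]
  have hτd : τ d ∈ L.erase d := Finset.mem_erase.2 ⟨hne d, h.inv d hd⟩
  have r1 : Rot L σ (fun d => c (src d)) (fun d => g (f (lab d))) (fun d => g (f (lab (τ d)))) :=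
    h.rot.congr g (fun _ _ => rfl) (fun _ _ => rfl)
  have r2 := r1.erase (d := d) (by simp only [← hl, ← hr, gl, gr]) hd
  have r3 := r2.erase (d := τ d) (by simp only [hτ, ← hl, ← hr, gl, gr]) hτd
  refine ⟨_, c, fun x => g (f x), r3, ?_, ?_, ?_, ?_, h.fine, ?_⟩
  · intro x hx
    simp only [Finset.mem_erase] at hx ⊢
    refine ⟨fun hh => hx.2.1 ?_, fun hh => hx.1 ?_, h.inv x hx.2.2⟩
    · rw [← hτ x, hh, hτ]
    · rw [← hτ x, hh]
  · intro P hP x y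
    refine h.conn (fun z => P (g z)) ?_ x y
    intro x hx hx'
    by_cases h1 : x = d
    · subst h1; simpa only [← hl, ← hr, gl, gr] using hx'
    by_cases h2 : x = τ d
    · subst h2; simpa only [hτ, ← hl, ← hr, gl, gr] using hx'
    · exact hP x (by simp [h1, h2, hx]) hx'
  · have hc := h.count
    by_cases hdZ : d ∈ Z
    · have hlr : l = r := h.seam d hd hdZ
      have : (fun x => g (f x)) = f := by
        funext x; simp only [hg]; split_ifs with hh
        · rw [hh, hlr]
        · rfl
      rw [this]
      have h2 : (((L.erase d).erase (τ d)) \ Z).card ≤ (L \ Z).card := by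
        apply Finset.card_le_card
        intro x; simp only [Finset.mem_sdiff, Finset.mem_erase]; tauto
      omega
    · have hdZ' : τ d ∉ Z := fun hh => hdZ (by have := hZ _ hh; rwa [hτ] at this)
      have h2 := card_erase_erase hd (h.inv d hd) (hne d) hdZ hdZ'
      have h3 := card_image_collapse f l r
      simp only [hg]
      omega
  · intro x hx hxZ
    simp only [Finset.mem_erase] at hx
    rw [h.seam x hx.2.2 hxZ]
  · intro x hx hxZ hxq
    by_cases hxL : x ∈ L
    · have : x = d ∨ x = τ d := by
        by_contra hh; push Not at hh; exact hx (by simp [hh, hxL])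
      rcases this with rfl | rfl
      · rcases hcase with h1 | h1 | h1
        · exact absurd h1 hxZ
        · exact absurd hxq h1
        · exact h1
      · rw [hτ] at hxq ⊢
        rcases hcase with h1 | h1 | h1
        · exact absurd (hZ _ h1) hxZ
        · exact absurd hxq.symm h1
        · exact h1.symm
    · exact h.done x hxL hxZ hxq

/-- Contracting a non-loop costs one edge and one vertex. Dual connectivity survives because the
faces on the two sides of the edge are still joined by walking around one of its ends. -/
theorem MinorState.contract (h : MinorState τ src lab Z q L σ c f)
    (hτ : ∀ d, τ (τ d) = d) (hne : ∀ d, τ d ≠ d) (hZ : ∀ d ∈ Z, τ d ∈ Z)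
    {d : D} (hd : d ∈ L) (hdZ : d ∉ Z) (hq : q (src d) = q (src (τ d)))
    (hc : c (src d) ≠ c (src (τ d))) :
    ∃ σ' c' f', MinorState τ src lab Z q ((L.erase d).erase (τ d)) σ' c' f' := by
  have hτd : τ d ∈ L.erase d := Finset.mem_erase.2 ⟨hne d, h.inv d hd⟩
  have hdZ' : τ d ∉ Z := fun hh => hdZ (by have := hZ _ hh; rwa [hτ] at this)
  have r1 := h.rot.merge hd (h.inv d hd) hc (by simp only [hτ]) rfl
  have r2 := r1.erase (d := d) (by simp) hd
  have r3 := r2.erase (d := τ d) (by simp) hτd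
  have r4 := r3.congr (lft' := fun d => f (lab d)) (rgt' := fun d => f (lab (τ d))) id
    (fun _ _ => rfl) (by
      intro x hx
      simp only [Finset.mem_erase] at hx
      simp [hx.1, hx.2.1])
  refine ⟨_, fun w => if c w = c (src (τ d)) then c (src d) else c w, f, r4, ?_, ?_, ?_, ?_, ?_, ?_⟩
  · intro x hx
    simp only [Finset.mem_erase] at hx ⊢
    refine ⟨fun hh => hx.2.1 ?_, fun hh => hx.1 ?_, h.inv x hx.2.2⟩
    · rw [← hτ x, hh, hτ]
    · rw [← hτ x, hh]
  · intro P hP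
    -- around a non-loop the two sides are joined through the other darts at its source
    have star : ∀ e ∈ L, (∀ x ∈ L, x ≠ e → c (src x) = c (src e) →
        x ∈ (L.erase d).erase (τ d)) → P (f (lab e)) → P (f (lab (τ e))) := by
      intro e he hin hPe
      have := h.rot.trans (σ e) (h.rot.mem he) e he (h.rot.ver_eq e he)
        (fun x => c (src x) = c (src e) ∧ (P (f (lab (τ x))) ∨ P (f (lab (τ e))))) (by
          rintro x hx ⟨hxe, hxP⟩
          refine ⟨(h.rot.ver_eq x hx).trans hxe, ?_⟩
          rcases hxP with hxP | hxP
          · by_cases hxe' : x = e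
            · right; rwa [hxe'] at hxP
            · left
              have hx' := hin x hx hxe' hxe
              have hx'' : τ x ∈ (L.erase d).erase (τ d) := by
                simp only [Finset.mem_erase] at hx' ⊢
                refine ⟨fun hh => hx'.2.1 ?_, fun hh => hx'.1 ?_, h.inv x hx⟩
                · rw [← hτ x, hh, hτ]
                · rw [← hτ x, hh]
              have := hP _ hx'' hxP
              rw [hτ] at this
              have hlab : f (lab (τ (σ x))) = f (lab x) := h.rot.lab x hx
              rwa [hlab]
          · right; exact hxP)
        ⟨h.rot.ver_eq e he, Or.inl (by
          have hlab : f (lab (τ (σ e))) = f (lab e) := h.rot.lab e he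
          rwa [hlab])⟩
      rcases this.2 with h1 | h1 <;> exact h1
    refine h.conn P ?_
    intro x hx hx'
    by_cases h1 : x = d
    · subst h1
      refine star x hx ?_ hx'
      intro y hy hyx hyc
      simp only [Finset.mem_erase]
      exact ⟨fun hh => hc (by rw [← hyc, hh]), hyx, hy⟩
    by_cases h2 : x = τ d
    · subst h2
      refine star _ hx ?_ hx'
      intro y hy hyx hyc
      simp only [Finset.mem_erase]
      exact ⟨hyx, fun hh => hc (by rw [← hyc, hh]), hy⟩
    · exact hP x (by simp [h1, h2, hx]) hx'
  · have hcn := h.count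
    have h2 := card_erase_erase hd (h.inv d hd) (hne d) hdZ hdZ'
    have h3 := card_image_collapse c (c (src d)) (c (src (τ d)))
    omega
  · intro x hx hxZ
    simp only [Finset.mem_erase] at hx
    exact h.seam x hx.2.2 hxZ
  · intro w w' hw
    split_ifs at hw with a1 a2 a2
    · exact h.fine _ _ (a1.trans a2.symm)
    · rw [h.fine _ _ a1, ← hq, h.fine _ _ hw]
    · rw [h.fine _ _ a2, ← hq, h.fine _ _ hw]
    · exact h.fine _ _ hw
  · intro x hx hxZ hxq
    by_cases hxL : x ∈ L
    · have : x = d ∨ x = τ d := by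
        by_contra hh; push Not at hh; exact hx (by simp [hh, hxL])
      rcases this with rfl | rfl
      · simp
      · simp [hτ]
    · simp only [h.done x hxL hxZ hxq]

/-- Every dart outside a `τ`-invariant set `T` can be deleted or contracted. -/
theorem MinorState.reduce
    (hτ : ∀ d, τ (τ d) = d) (hne : ∀ d, τ d ≠ d) (hZ : ∀ d ∈ Z, τ d ∈ Z)
    {T : Finset D} (hT : ∀ d ∈ T, τ d ∈ T) (n : ℕ) :
    ∀ (L : Finset D) (σ : Equiv.Perm D) (c f : W → W), MinorState τ src lab Z q L σ c f →
      T ⊆ L → (L \ T).card ≤ n → ∃ σ' c' f', MinorState τ src lab Z q T σ' c' f' := by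
  induction n with
  | zero =>
    intro L σ c f h hTL hcard
    have : L = T := by
      apply Finset.Subset.antisymm _ hTL
      rw [← Finset.sdiff_eq_empty_iff_subset]
      exact Finset.card_eq_zero.1 (Nat.le_zero.1 hcard)
    subst this
    exact ⟨σ, c, f, h⟩
  | succ n ih =>
    intro L σ c f h hTL hcard
    by_cases hLT : L \ T = ∅
    · exact ih L σ c f h hTL (by simp [hLT])
    obtain ⟨d, hdm⟩ := Finset.nonempty_iff_ne_empty.2 hLT
    obtain ⟨hd, hdT⟩ := Finset.mem_sdiff.1 hdm
    have hdT' : τ d ∉ T := fun hh => hdT (by have := hT _ hh; rwa [hτ] at this)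
    have step : ∃ σ' c' f', MinorState τ src lab Z q ((L.erase d).erase (τ d)) σ' c' f' := by
      by_cases hcase : d ∈ Z ∨ q (src d) ≠ q (src (τ d)) ∨ c (src d) = c (src (τ d))
      · exact h.delete hτ hne hZ hd hcase
      · push Not at hcase
        exact h.contract hτ hne hZ hd hcase.1 hcase.2.1 hcase.2.2
    obtain ⟨σ', c', f', h'⟩ := step
    refine ih _ σ' c' f' h' ?_ ?_
    · intro x hx
      simp only [Finset.mem_erase]
      exact ⟨fun hh => hdT' (hh ▸ hx), fun hh => hdT (hh ▸ hx), hTL hx⟩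
    · have : ((L.erase d).erase (τ d)) \ T ⊆ (L \ T).erase d := by
        intro x; simp only [Finset.mem_sdiff, Finset.mem_erase]; tauto
      have := Finset.card_le_card this
      have := Finset.card_erase_add_one hdm
      omega

end

/-! ### The plane map extracted from a minor -/

/-- A plane map on a bipartite graph with vertex classes `V` and `K` and edge set `Dt`, where `a`
joins `v a` to `κ a`. The maps `s` and `ρ` are the rotations at the vertices in `V` and in `K`; they
are transitive on each vertex (stated for invariant predicates). `h a` is the face of a chosen side
of `a`, and `s ∘ ρ` steps along the boundary of that face. `euler` is Euler's inequality, with only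
the labels in use counted as faces. -/
structure PlaneMap {Dt V K F : Type*} [Fintype Dt] [Fintype V] [Fintype K] [DecidableEq F]
    (v : Dt → V) (κ : Dt → K) (s ρ : Dt → Dt) (h : Dt → F) : Prop where
  s_inj : Function.Injective s
  ρ_inj : Function.Injective ρ
  v_s : ∀ d, v (s d) = v d
  κ_ρ : ∀ d, κ (ρ d) = κ d
  s_trans : ∀ a b, v a = v b → ∀ P : Dt → Prop, (∀ x, P x → P (s x)) → P a → P b
  ρ_trans : ∀ a b, κ a = κ b → ∀ P : Dt → Prop, (∀ x, P x → P (ρ x)) → P a → P b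
  face : ∀ d, h (s (ρ d)) = h d
  euler : Fintype.card Dt + 2 ≤ (Finset.univ.image h).card + Fintype.card V + Fintype.card K

/-- Reducing a host map whose vertex partition `q` has connected classes indexed by `V ⊕ K`, and
keeping one host edge `t a` for each `a : Dt`, leaves a plane map with vertex classes `V` and `K`. -/
theorem MinorState.extract {D W V K Dt : Type*} [Fintype D] [DecidableEq D] [Fintype W]
    [DecidableEq W] [Fintype V] [Fintype K] [Fintype Dt] [Nonempty Dt]
    {τ : D → D} {src lab : D → W} {Z : Finset D} {q : W → V ⊕ K}
    {σ₀ : Equiv.Perm D} {c₀ f₀ : W → W}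
    (h₀ : MinorState τ src lab Z q Finset.univ σ₀ c₀ f₀)
    (hτ : ∀ d, τ (τ d) = d) (hne : ∀ d, τ d ≠ d) (hZ : ∀ d ∈ Z, τ d ∈ Z)
    (hq : ∀ w w', q w = q w' → ∀ P : W → Prop,
      (∀ d, d ∉ Z → q (src d) = q (src (τ d)) → P (src d) → P (src (τ d))) → P w → P w')
    (v : Dt → V) (κ : Dt → K) (hvκ : ∀ a b, v a = v b → κ a = κ b → a = b)
    (t : Dt → D) (htZ : ∀ a, t a ∉ Z) (ht1 : ∀ a, q (src (t a)) = Sum.inl (v a))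
    (ht2 : ∀ a, q (src (τ (t a))) = Sum.inr (κ a)) :
    ∃ (s ρ : Dt → Dt) (h : Dt → W), PlaneMap v κ s ρ h := by
  classical
  have tinj : Function.Injective t := by
    intro a b hab
    refine hvκ a b ?_ ?_
    · have := ht1 a; rw [hab, ht1 b] at this; exact (Sum.inl.inj this).symm
    · have := ht2 a; rw [hab, ht2 b] at this; exact (Sum.inr.inj this).symm
  have τinj : Function.Injective τ := fun a b hab => by rw [← hτ a, hab, hτ]
  have tne : ∀ a b, t a ≠ τ (t b) := by
    intro a b hab
    have := ht1 a; rw [hab, ht2 b] at this; cases this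
  set T : Finset D := Finset.univ.image t ∪ Finset.univ.image (fun a => τ (t a)) with hTdef
  have memT : ∀ x, x ∈ T ↔ (∃ a, t a = x) ∨ (∃ a, τ (t a) = x) := by
    intro x; simp [hTdef]
  have hT1 : ∀ a, t a ∈ T := fun a => (memT _).2 (Or.inl ⟨a, rfl⟩)
  have hT2 : ∀ a, τ (t a) ∈ T := fun a => (memT _).2 (Or.inr ⟨a, rfl⟩)
  have hTinv : ∀ d ∈ T, τ d ∈ T := by
    intro d hd
    rcases (memT d).1 hd with ⟨a, rfl⟩ | ⟨a, rfl⟩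
    · exact hT2 a
    · rw [hτ]; exact hT1 a
  have hTcard : T.card = 2 * Fintype.card Dt := by
    rw [hTdef, Finset.card_union_of_disjoint, Finset.card_image_of_injective _ tinj,
      Finset.card_image_of_injective (f := fun a => τ (t a)) _ (τinj.comp tinj), Finset.card_univ, two_mul]
    rw [Finset.disjoint_left]
    intro x hx hx'
    simp only [Finset.mem_image, Finset.mem_univ, true_and] at hx hx'
    obtain ⟨a, rfl⟩ := hx
    obtain ⟨b, hb⟩ := hx'
    exact tne a b hb.symm
  have hTZ : T \ Z = T := by
    rw [Finset.sdiff_eq_self_iff_disjoint, Finset.disjoint_left]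
    intro x hx hxZ
    rcases (memT x).1 hx with ⟨a, rfl⟩ | ⟨a, rfl⟩
    · exact htZ a hxZ
    · exact htZ a (by have := hZ _ hxZ; rwa [hτ] at this)
  obtain ⟨σ, c, f, H⟩ := MinorState.reduce hτ hne hZ hTinv _ _ _ _ _ h₀
    (Finset.subset_univ T) le_rfl
  have hcq : ∀ w w', q w = q w' → c w = c w' := by
    intro w w' hww
    refine hq w w' hww (fun x => c w = c x) ?_ rfl
    intro d hdZ hdq hP
    rw [hP]
    refine H.done d ?_ hdZ hdq
    intro hdT
    rcases (memT d).1 hdT with ⟨a, rfl⟩ | ⟨a, rfl⟩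
    · rw [ht1, ht2] at hdq; cases hdq
    · rw [hτ, ht1, ht2] at hdq; cases hdq
  have hs : ∀ a, ∃ b, t b = σ (t a) := by
    intro a
    rcases (memT _).1 (H.rot.mem (hT1 a)) with hb | ⟨b, hb⟩
    · exact hb
    · have := H.fine _ _ (H.rot.ver_eq _ (hT1 a))
      rw [← hb, ht1, ht2] at this; cases this
  have hr : ∀ a, ∃ b, τ (t b) = σ (τ (t a)) := by
    intro a
    rcases (memT _).1 (H.rot.mem (hT2 a)) with ⟨b, hb⟩ | hb
    · have := H.fine _ _ (H.rot.ver_eq _ (hT2 a))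
      rw [← hb, ht1, ht2] at this; cases this
    · exact hb
  choose s hs using hs
  choose ρ hr using hr
  have lab1 : ∀ a, f (lab (τ (t (s a)))) = f (lab (t a)) := by
    intro a; rw [hs]; exact H.rot.lab _ (hT1 a)
  have lab2 : ∀ a, f (lab (t (ρ a))) = f (lab (τ (t a))) := by
    intro a
    have := H.rot.lab _ (hT2 a)
    simp only [← hr, hτ] at this
    exact this
  refine ⟨s, ρ, fun a => f (lab (τ (t a))), ?_, ?_, ?_, ?_, ?_, ?_, ?_, ?_⟩
  · intro a b hab
    apply tinj; apply σ.injective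
    rw [← hs, ← hs, hab]
  · intro a b hab
    apply tinj; apply τinj; apply σ.injective
    rw [← hr, ← hr, hab]
  · intro a
    have := H.fine _ _ (H.rot.ver_eq _ (hT1 a))
    rw [← hs, ht1, ht1] at this
    exact Sum.inl.inj this
  · intro a
    have := H.fine _ _ (H.rot.ver_eq _ (hT2 a))
    rw [← hr, ht2, ht2] at this
    exact Sum.inr.inj this
  · intro a b hab P hP hPa
    have := H.rot.trans _ (hT1 a) _ (hT1 b) (hcq _ _ (by rw [ht1, ht1, hab]))
      (fun x => ∃ e, t e = x ∧ P e) (by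
        rintro x - ⟨e, rfl, he⟩
        exact ⟨s e, hs e, hP e he⟩) ⟨a, rfl, hPa⟩
    obtain ⟨e, he, hPe⟩ := this
    rwa [tinj he] at hPe
  · intro a b hab P hP hPa
    have := H.rot.trans _ (hT2 a) _ (hT2 b) (hcq _ _ (by rw [ht2, ht2, hab]))
      (fun x => ∃ e, τ (t e) = x ∧ P e) (by
        rintro x - ⟨e, rfl, he⟩
        exact ⟨ρ e, hr e, hP e he⟩) ⟨a, rfl, hPa⟩
    obtain ⟨e, he, hPe⟩ := this
    rwa [tinj (τinj he)] at hPe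
  · intro a
    simp only [lab1, lab2]
  · have hcount := H.count
    rw [hTZ, hTcard] at hcount
    have hne' : Nonempty W := ⟨src (t (Classical.arbitrary Dt))⟩
    have hcc : (Finset.univ.image c).card ≤ Fintype.card V + Fintype.card K := by
      rw [← Fintype.card_sum, ← Finset.card_univ]
      refine Finset.card_le_card_of_injOn (fun y => q (Function.invFun c y))
        (fun _ _ => Finset.mem_coe.2 (Finset.mem_univ _)) ?_
      intro y hy y' hy' hyy
      simp only [Finset.coe_image, Finset.coe_univ, Set.image_univ] at hy hy'
      rw [← Function.invFun_eq hy, ← Function.invFun_eq hy']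
      exact hcq _ _ hyy
    have hff : Finset.univ.image f ⊆ Finset.univ.image (fun a => f (lab (τ (t a)))) := by
      intro y hy
      obtain ⟨x, -, rfl⟩ := Finset.mem_image.1 hy
      have := H.conn (fun y => ∃ a, f (lab (τ (t a))) = y) (by
        intro d hd _
        rcases (memT d).1 hd with ⟨a, rfl⟩ | ⟨a, rfl⟩
        · exact ⟨a, rfl⟩
        · exact ⟨s a, by rw [lab1, hτ]⟩) (lab (τ (t (Classical.arbitrary Dt)))) x
        ⟨_, rfl⟩
      simpa using this
    have := Finset.card_le_card hff
    omega

/-! ### Growing connected sets -/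

/-- Connectedness of a vertex set `S`: a predicate that spreads along the edges inside `S` spreads
over all of `S`. -/
def Linked {W : Type*} (Adj : W → W → Prop) (S : Set W) : Prop :=
  ∀ P : W → Prop, (∀ x ∈ S, ∀ y ∈ S, Adj x y → P x → P y) → ∀ x ∈ S, ∀ y ∈ S, P x → P y

theorem Linked.exists_adj {W : Type*} {Adj : W → W → Prop} {S : Set W} (h : Linked Adj S)
    (P : W → Prop) {x y : W} (hx : x ∈ S) (hy : y ∈ S) (hPx : P x) (hPy : ¬ P y) :
    ∃ a ∈ S, ∃ b ∈ S, Adj a b ∧ P a ∧ ¬ P b := by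
  by_contra hcon
  push Not at hcon
  exact hPy (h P (fun a ha b hb hab hPa => hcon a ha b hb hab hPa) x hx y hy hPx)

theorem Linked.insert {W : Type*} {Adj : W → W → Prop} {S : Set W} (h : Linked Adj S)
    (hsymm : ∀ x y, Adj x y → Adj y x) {x y : W} (hx : x ∈ S) (hxy : Adj x y) :
    Linked Adj (insert y S) := by
  intro P hP a ha b hb hPa
  have hS := h P (fun u hu w hw => hP u (Or.inr hu) w (Or.inr hw))
  have hPx : P x := by
    rcases ha with rfl | ha
    · exact hP _ (Or.inl rfl) x (Or.inr hx) (hsymm _ _ hxy) hPa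
    · exact hS a ha x hx hPa
  rcases hb with rfl | hb
  · exact hP x (Or.inr hx) _ (Or.inl rfl) hxy hPx
  · exact hS x hx b hb hPx

/-- In a connected graph, disjoint connected sets `A i` extend to a partition into connected classes.
If the set `C d` is connected, links `A (a d)` to `A (b d)`, and is disjoint from the other `A i` and
`C d'`, then the partition can be chosen with an edge between the classes of `a d` and `b d`. -/
theorem growth {W I Dt : Type*} [Fintype W] [Nonempty Dt] {Adj : W → W → Prop}
    (hsymm : ∀ x y, Adj x y → Adj y x) (huniv : Linked Adj (univ : Set W))
    (A : I → Set W) (hA : ∀ i, Linked Adj (A i))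
    (hAd : ∀ i j x, x ∈ A i → x ∈ A j → i = j)
    (a b : Dt → I) (hab : ∀ d, a d ≠ b d) (C : Dt → Set W) (hC : ∀ d, Linked Adj (C d))
    (hCd : ∀ d d' x, x ∈ C d → x ∈ C d' → d = d')
    (hCa : ∀ d, (C d ∩ A (a d)).Nonempty) (hCb : ∀ d, (C d ∩ A (b d)).Nonempty)
    (hCA : ∀ d i x, x ∈ C d → x ∈ A i → i = a d ∨ i = b d) :
    ∃ q : W → I, (∀ i, Linked Adj {w | q w = i}) ∧
      ∀ d, ∃ x y, Adj x y ∧ q x = a d ∧ q y = b d := by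
  classical
  have main : ∀ n : ℕ, ∀ p : W → Option I, (∀ i, ∀ x ∈ A i, p x = some i) →
      (∀ d i, ∀ x ∈ C d, p x = some i → i = a d ∨ i = b d) →
      (∀ i, Linked Adj {w | p w = some i}) →
      (Finset.univ.filter (fun x => p x = none)).card = n →
      ∃ q : W → I, (∀ i, ∀ x ∈ A i, q x = i) ∧ (∀ d, ∀ x ∈ C d, q x = a d ∨ q x = b d) ∧
        ∀ i, Linked Adj {w | q w = i} := by
    intro n
    induction n with
    | zero =>
      intro p h1 h2 h3 h4
      have : ∀ x, ∃ i, p x = some i := by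
        intro x
        rw [← Option.ne_none_iff_exists']
        intro hx
        have : x ∈ Finset.univ.filter (fun x => p x = none) := by simp [hx]
        rw [Finset.card_eq_zero.1 h4] at this
        simp at this
      choose q hq using this
      refine ⟨q, ?_, ?_, ?_⟩
      · intro i x hx
        have := h1 i x hx
        rw [hq] at this; exact Option.some.inj this
      · intro d x hx
        exact h2 d _ x hx (hq x)
      · intro i
        have : {w | q w = i} = {w | p w = some i} := by
          ext w; simp [hq]
        rw [this]; exact h3 i
    | succ n ih =>
      intro p h1 h2 h3 h4
      have step : ∀ x y i, Adj x y → p x = some i → p y = none →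
          (∀ d, y ∈ C d → i = a d ∨ i = b d) →
          ∃ q : W → I, (∀ i, ∀ x ∈ A i, q x = i) ∧ (∀ d, ∀ x ∈ C d, q x = a d ∨ q x = b d) ∧
            ∀ i, Linked Adj {w | q w = i} := by
        intro x y i hxy hx hy hyC
        have hyx : x ≠ y := by rintro rfl; rw [hx] at hy; cases hy
        refine ih (Function.update p y (some i)) ?_ ?_ ?_ ?_
        · intro j z hz
          by_cases hzy : z = y
          · subst hzy; rw [h1 j z hz] at hy; cases hy
          · rw [Function.update_of_ne hzy]; exact h1 j z hz
        · intro d j z hz hzj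
          by_cases hzy : z = y
          · subst hzy
            rw [Function.update_self] at hzj
            rw [← Option.some.inj hzj]; exact hyC d hz
          · rw [Function.update_of_ne hzy] at hzj; exact h2 d j z hz hzj
        · intro j
          by_cases hij : j = i
          · subst hij
            have : {w | Function.update p y (some j) w = some j} =
                insert y {w | p w = some j} := by
              ext w
              by_cases hw : w = y
              · subst hw; simp
              · simp [hw]
            rw [this]
            exact (h3 j).insert hsymm (x := x) hx hxy
          · have : {w | Function.update p y (some i) w = some j} = {w | p w = some j} := by
              ext w
              by_cases hw : w = y
              · subst hw; simp [hy, Ne.symm hij]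
              · simp [Function.update_of_ne hw]
            rw [this]; exact h3 j
        · have : Finset.univ.filter (fun z => Function.update p y (some i) z = none) =
              (Finset.univ.filter (fun z => p z = none)).erase y := by
            ext w
            by_cases hw : w = y
            · subst hw; simp
            · simp [hw]
          rw [this, Finset.card_erase_of_mem (by simp [hy]), h4]; rfl
      by_cases hall : ∀ d, ∀ x ∈ C d, p x ≠ none
      · obtain ⟨y, hy⟩ : (Finset.univ.filter (fun x => p x = none)).Nonempty := by
          rw [← Finset.card_pos]; omega
        obtain ⟨x, -, hx⟩ := hCa (Classical.arbitrary Dt)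
        have hx' := h1 _ x hx
        obtain ⟨u, -, w, -, huw, hu, hw⟩ := huniv.exists_adj (fun z => p z ≠ none)
          (mem_univ x) (mem_univ y) (by simp [hx']) (by simpa using hy)
        obtain ⟨i, hi⟩ := Option.ne_none_iff_exists'.1 hu
        exact step u w i huw hi (by simpa using hw) (fun d hd => absurd (by simpa using hw) (hall d w hd))
      · push Not at hall
        obtain ⟨d, y, hyC, hy⟩ := hall
        obtain ⟨x, hxC, hx⟩ := hCa d
        have hx' := h1 _ x hx
        obtain ⟨u, huC, w, hwC, huw, hu, hw⟩ := (hC d).exists_adj (fun z => p z ≠ none)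
          hxC hyC (by simp [hx']) (by simpa using hy)
        obtain ⟨i, hi⟩ := Option.ne_none_iff_exists'.1 hu
        refine step u w i huw hi (by simpa using hw) ?_
        intro d' hd'
        rw [← hCd d d' w hwC hd']
        exact h2 d i u huC hi
  let p₀ : W → Option I := fun x => if h : ∃ i, x ∈ A i then some h.choose else none
  have hp₀ : ∀ x i, p₀ x = some i ↔ x ∈ A i := by
    intro x i
    by_cases hx : ∃ i, x ∈ A i
    · have : p₀ x = some hx.choose := dif_pos hx
      rw [this]
      constructor
      · intro h; rw [← Option.some.inj h]; exact hx.choose_spec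
      · intro h; rw [hAd _ _ x hx.choose_spec h]
    · have : p₀ x = none := dif_neg hx
      rw [this]
      exact ⟨fun h => (by cases h), fun h => absurd ⟨i, h⟩ hx⟩
  obtain ⟨q, q1, q2, q3⟩ := main _ p₀ (fun i x hx => (hp₀ x i).2 hx)
    (fun d i x hx hxi => hCA d i x hx ((hp₀ x i).1 hxi))
    (fun i => by
      have : {w | p₀ w = some i} = A i := by ext w; exact hp₀ w i
      rw [this]; exact hA i) rfl
  refine ⟨q, q3, fun d => ?_⟩
  obtain ⟨x, hxC, hx⟩ := hCa d
  obtain ⟨y, hyC, hy⟩ := hCb d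
  obtain ⟨u, huC, w, hwC, huw, hu, hw⟩ := (hC d).exists_adj (fun z => q z = a d) hxC hyC
    (q1 _ x hx) (by rw [q1 _ y hy]; exact (hab d).symm)
  exact ⟨u, w, huw, hu, (q2 d w hwC).resolve_left hw⟩

/-! ### The toroidal grid -/

/-- Darts of the grid on the torus: a source and a direction. The first Boolean is `true` for
vertical darts, the second is `true` for darts pointing in the negative direction. -/
abbrev TDart (N : ℕ) : Type := (Fin (N + 1) × Fin (N + 1)) × Bool × Bool

/-- The source of a dart. -/
def tsrc {N : ℕ} (d : TDart N) : Fin (N + 1) × Fin (N + 1) := d.1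

/-- The reverse dart. -/
def trev {N : ℕ} : TDart N → TDart N
  | ((i, j), (false, false)) => ((i + 1, j), (false, true))
  | ((i, j), (true, false)) => ((i, j + 1), (true, true))
  | ((i, j), (false, true)) => ((i - 1, j), (false, false))
  | ((i, j), (true, true)) => ((i, j - 1), (true, false))

/-- The square to the left of a dart, named after its lower left corner. -/
def tlab {N : ℕ} : TDart N → Fin (N + 1) × Fin (N + 1)
  | ((i, j), (false, false)) => (i, j)
  | ((i, j), (true, false)) => (i - 1, j)
  | ((i, j), (false, true)) => (i - 1, j - 1)
  | ((i, j), (true, true)) => (i, j - 1)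

/-- The next dart at the same source, counterclockwise. -/
def tnext {N : ℕ} : TDart N → TDart N
  | (p, (false, false)) => (p, (true, false))
  | (p, (true, false)) => (p, (false, true))
  | (p, (false, true)) => (p, (true, true))
  | (p, (true, true)) => (p, (false, false))

/-- The next dart at the same source, clockwise. -/
def tprev {N : ℕ} : TDart N → TDart N
  | (p, (true, false)) => (p, (false, false))
  | (p, (false, true)) => (p, (true, false))
  | (p, (true, true)) => (p, (false, true))
  | (p, (false, false)) => (p, (true, true))

/-- The rotation system of the toroidal grid. -/
def tperm (N : ℕ) : Equiv.Perm (TDart N) where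
  toFun := tnext
  invFun := tprev
  left_inv := by rintro ⟨p, (_ | _), (_ | _)⟩ <;> rfl
  right_inv := by rintro ⟨p, (_ | _), (_ | _)⟩ <;> rfl

/-- The dart wraps around the torus. -/
def tseamP {N : ℕ} : TDart N → Prop
  | ((i, _), (false, false)) => i = Fin.last N
  | ((_, j), (true, false)) => j = Fin.last N
  | ((i, _), (false, true)) => i = 0
  | ((_, j), (true, true)) => j = 0

open Classical in
/-- The darts that wrap around the torus; the others form the ordinary planar grid. -/
noncomputable def tseam (N : ℕ) : Finset (TDart N) := Finset.univ.filter tseamP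

/-- The squares outside the planar grid, those in the last row or column, form one outer face. -/
def tout {N : ℕ} (p : Fin (N + 1) × Fin (N + 1)) : Fin (N + 1) × Fin (N + 1) :=
  if p.1 = Fin.last N ∨ p.2 = Fin.last N then (Fin.last N, Fin.last N) else p

theorem trev_trev {N : ℕ} (d : TDart N) : trev (trev d) = d := by
  obtain ⟨⟨i, j⟩, (_ | _), (_ | _)⟩ := d <;> simp [trev]

theorem trev_ne {N : ℕ} (d : TDart N) : trev d ≠ d := by
  obtain ⟨⟨i, j⟩, (_ | _), (_ | _)⟩ := d <;> simp [trev]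

theorem tseam_rev {N : ℕ} (d : TDart N) (hd : d ∈ tseam N) : trev d ∈ tseam N := by
  simp only [tseam, Finset.mem_filter, Finset.mem_univ, true_and] at hd ⊢
  obtain ⟨⟨i, j⟩, (_ | _), (_ | _)⟩ := d <;> simp only [tseamP, trev] at hd ⊢ <;> subst hd <;>
    simp [← Fin.last_add_one]

open Fin.CommRing in
/-- Induction around the cycle `Fin (N + 1)`. -/
theorem fin_cyclic {N : ℕ} (Q : Fin (N + 1) → Prop) (hQ : ∀ i, Q i → Q (i + 1))
    (a b : Fin (N + 1)) (ha : Q a) : Q b := by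
  have : ∀ n : ℕ, Q (a + (n : Fin (N + 1))) := by
    intro n
    induction n with
    | zero => simpa using ha
    | succ n ih => have := hQ _ ih; rwa [add_assoc, ← Nat.cast_succ] at this
  have h := this ((b - a : Fin (N + 1)) : ℕ)
  rwa [Fin.cast_val_eq_self, add_sub_cancel] at h

theorem neg_one_last {N : ℕ} : (-1 : Fin (N + 1)) = Fin.last N := by
  rw [neg_eq_iff_add_eq_zero]
  exact (add_comm _ _).trans (Fin.last_add_one N)

/-- The planar grid as a host map. The rotation is that of the torus; after the outer squares are
identified, Euler's inequality for the non-seam edges is a count. -/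
theorem torus_state {I : Type*} (N : ℕ) (q : Fin (N + 1) × Fin (N + 1) → I) :
    MinorState trev tsrc tlab (tseam N) q Finset.univ (tperm N) id tout := by
  classical
  refine ⟨⟨?_, ?_, ?_, ?_⟩, fun _ _ => Finset.mem_univ _, ?_, ?_, ?_, ?_, ?_⟩
  · intro d hd; exact absurd (Finset.mem_univ d) hd
  · rintro ⟨p, (_ | _), (_ | _)⟩ - <;> rfl
  · rintro ⟨p, x⟩ - ⟨p', x'⟩ - hp P hP hPa
    obtain rfl : p = p' := hp
    have h1 := hP (p, (false, false)) (Finset.mem_univ _)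
    have h2 := hP (p, (true, false)) (Finset.mem_univ _)
    have h3 := hP (p, (false, true)) (Finset.mem_univ _)
    have h4 := hP (p, (true, true)) (Finset.mem_univ _)
    simp only [tperm, Equiv.coe_fn_mk, tnext] at h1 h2 h3 h4
    obtain ⟨(_ | _), (_ | _)⟩ := x <;> obtain ⟨(_ | _), (_ | _)⟩ := x' <;> tauto
  · rintro ⟨⟨i, j⟩, (_ | _), (_ | _)⟩ - <;> simp [tperm, tnext, trev, tlab]
  · intro P hP
    have h1 : ∀ i j, P (tout (i, j)) → P (tout (i + 1, j)) := by
      intro i j h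
      have := hP ((i + 1, j), (true, false)) (Finset.mem_univ _)
      simpa [trev, tlab, h] using this
    have h2 : ∀ i j, P (tout (i, j)) → P (tout (i, j + 1)) := by
      intro i j h
      have := hP ((i + 1, j + 1), (false, true)) (Finset.mem_univ _)
      simpa [trev, tlab, h] using this
    rintro ⟨i, j⟩ ⟨i', j'⟩ h
    have h3 := fin_cyclic (fun i => P (tout (i, j))) (fun i => h1 i j) i i' h
    exact fin_cyclic (fun j => P (tout (i', j))) (fun j => h2 i' j) j j' h3
  · have hc : (Finset.univ \ tseam N).card ≤ 4 * (N * (N + 1)) := by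
      set U : Finset (Fin (N + 1)) := Finset.univ
      have hU : U.card = N + 1 := by simp [U]
      have hE : ∀ x : Fin (N + 1), (U.erase x).card = N := by intro x; simp [U]
      have hsub : Finset.univ \ tseam N ⊆
          (((U.erase (Fin.last N)) ×ˢ U).image (fun p => (p, (false, false)))
          ∪ (U ×ˢ (U.erase (Fin.last N))).image (fun p => (p, (true, false))))
          ∪ (((U.erase 0) ×ˢ U).image (fun p => (p, (false, true)))
          ∪ (U ×ˢ (U.erase 0)).image (fun p => (p, (true, true)))) := by
        rintro ⟨⟨i, j⟩, (_ | _), (_ | _)⟩ hd <;>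
          simp only [tseam, Finset.mem_sdiff, Finset.mem_filter, Finset.mem_univ, true_and,
            tseamP] at hd <;> simp [U, hd]
      refine (Finset.card_le_card hsub).trans ((Finset.card_union_le _ _).trans ?_)
      have a1 := Finset.card_union_le
        (((U.erase (Fin.last N)) ×ˢ U).image (fun p => (p, (false, false))))
        ((U ×ˢ (U.erase (Fin.last N))).image (fun p => (p, (true, false))))
      have a2 := Finset.card_union_le
        (((U.erase 0) ×ˢ U).image (fun p => (p, (false, true))))
        ((U ×ˢ (U.erase 0)).image (fun p => (p, (true, true))))
      have b : ∀ (x y : Finset (Fin (N + 1))) (z : Bool × Bool),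
          ((x ×ˢ y).image (fun p => (p, z))).card ≤ x.card * y.card :=
        fun x y z => Finset.card_image_le.trans (Finset.card_product _ _).le
      have b1 := b (U.erase (Fin.last N)) U (false, false)
      have b2 := b U (U.erase (Fin.last N)) (true, false)
      have b3 := b (U.erase 0) U (false, true)
      have b4 := b U (U.erase 0) (true, true)
      rw [hU, hE] at b1 b2 b3 b4
      rw [mul_comm (N + 1) N] at b2 b4
      omega
    have hf : N * N + 1 ≤ (Finset.univ.image (tout (N := N))).card := by
      set E : Finset (Fin (N + 1)) := Finset.univ.erase (Fin.last N)
      have hE : E.card = N := by simp [E]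
      have : insert (Fin.last N, Fin.last N) (E ×ˢ E) ⊆ Finset.univ.image (tout (N := N)) := by
        rintro ⟨i, j⟩ hij
        rw [Finset.mem_image]
        refine ⟨(i, j), Finset.mem_univ _, ?_⟩
        rcases Finset.mem_insert.1 hij with h | h
        · rw [h]; simp [tout]
        · simp [E] at h; simp [tout, h]
      refine le_trans ?_ (Finset.card_le_card this)
      rw [Finset.card_insert_of_notMem (by simp [E]), Finset.card_product, hE]
    have hid : (Finset.univ.image (id : Fin (N + 1) × Fin (N + 1) → _)).card
        = (N + 1) * (N + 1) := by simp
    rw [hid]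
    nlinarith
  · intro d _ hd
    simp only [tseam, Finset.mem_filter, Finset.mem_univ, true_and] at hd
    obtain ⟨⟨i, j⟩, (_ | _), (_ | _)⟩ := d <;> simp only [tseamP] at hd <;> subst hd <;>
      simp [tout, trev, tlab, neg_one_last]
  · intro w w' h; exact congrArg q h
  · intro d hd; exact absurd (Finset.mem_univ d) hd

/-- Adjacency in the planar grid, without wrapping around. -/
def GAdj {N : ℕ} (x y : Fin (N + 1) × Fin (N + 1)) : Prop :=
  ∃ d : TDart N, d ∉ tseam N ∧ tsrc d = x ∧ tsrc (trev d) = y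

theorem GAdj.symm {N : ℕ} {x y : Fin (N + 1) × Fin (N + 1)} (h : GAdj x y) : GAdj y x := by
  obtain ⟨d, hd, rfl, rfl⟩ := h
  refine ⟨trev d, fun hh => hd ?_, rfl, by rw [trev_trev]⟩
  have := tseam_rev _ hh
  rwa [trev_trev] at this

/-- A system of disjoint connected sets of grid cells with connectors between them, incident
according to `v` and `κ`, yields a plane map. -/
theorem grid_map {V K Dt : Type*} [Fintype V] [Fintype K] [Fintype Dt] [Nonempty Dt] (N : ℕ)
    (v : Dt → V) (κ : Dt → K) (hvκ : ∀ a b, v a = v b → κ a = κ b → a = b)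
    (huniv : Linked (GAdj (N := N)) univ)
    (A : V ⊕ K → Set (Fin (N + 1) × Fin (N + 1))) (hA : ∀ i, Linked GAdj (A i))
    (hAd : ∀ i j x, x ∈ A i → x ∈ A j → i = j)
    (C : Dt → Set (Fin (N + 1) × Fin (N + 1))) (hC : ∀ d, Linked GAdj (C d))
    (hCd : ∀ d d' x, x ∈ C d → x ∈ C d' → d = d')
    (hCa : ∀ d, (C d ∩ A (Sum.inl (v d))).Nonempty)
    (hCb : ∀ d, (C d ∩ A (Sum.inr (κ d))).Nonempty)
    (hCA : ∀ d i x, x ∈ C d → x ∈ A i → i = Sum.inl (v d) ∨ i = Sum.inr (κ d)) :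
    ∃ (s ρ : Dt → Dt) (h : Dt → Fin (N + 1) × Fin (N + 1)), PlaneMap v κ s ρ h := by
  obtain ⟨q, q1, q2⟩ := growth (fun _ _ h => GAdj.symm h) huniv A hA hAd
    (fun d => Sum.inl (v d)) (fun d => Sum.inr (κ d)) (fun _ h => by cases h) C hC hCd hCa hCb hCA
  have q3 : ∀ d, ∃ t : TDart N, t ∉ tseam N ∧ q (tsrc t) = Sum.inl (v d) ∧
      q (tsrc (trev t)) = Sum.inr (κ d) := by
    intro d
    obtain ⟨x, y, ⟨t, ht, rfl, rfl⟩, hx, hy⟩ := q2 d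
    exact ⟨t, ht, hx, hy⟩
  choose t t1 t2 t3 using q3
  refine (torus_state N q).extract trev_trev trev_ne tseam_rev ?_ v κ hvκ t t1 t2 t3
  intro w w' hww P hP hPw
  refine q1 (q w) P ?_ w rfl w' hww.symm hPw
  rintro x hx y hy ⟨d, hd, rfl, rfl⟩ hPx
  exact hP d hd (by rw [mem_ofPred_eq] at hx hy; rw [hx, hy]) hPx

/-! ### From the plane to the grid -/

/-- The closed square of side `δ` with grid coordinates `p`, in a grid with lower left corner
`(a, a)`. -/
def cell {N : ℕ} (a δ : ℝ) (p : Fin (N + 1) × Fin (N + 1)) : Set (ℝ × ℝ) :=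
  Icc (a + p.1.val * δ) (a + (p.1.val + 1) * δ) ×ˢ Icc (a + p.2.val * δ) (a + (p.2.val + 1) * δ)

/-- The grid squares that meet `S`. -/
def cells (N : ℕ) (a δ : ℝ) (S : Set (ℝ × ℝ)) : Set (Fin (N + 1) × Fin (N + 1)) :=
  {p | ∃ x ∈ S, x ∈ cell a δ p}

theorem cells_inter {N : ℕ} {a δ : ℝ} {S T : Set (ℝ × ℝ)} {p : Fin (N + 1) × Fin (N + 1)}
    (hS : p ∈ cells N a δ S) (hT : p ∈ cells N a δ T) : ∃ x ∈ S, ∃ y ∈ T, dist x y ≤ δ := by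
  obtain ⟨x, hx, hx'⟩ := hS
  obtain ⟨y, hy, hy'⟩ := hT
  refine ⟨x, hx, y, hy, ?_⟩
  simp only [cell, mem_prod, mem_Icc] at hx' hy'
  rw [Prod.dist_eq, max_le_iff, Real.dist_eq, Real.dist_eq, abs_le, abs_le]
  refine ⟨⟨?_, ?_⟩, ?_, ?_⟩ <;> linarith [hx'.1.1, hx'.1.2, hx'.2.1, hx'.2.2, hy'.1.1, hy'.1.2, hy'.2.1, hy'.2.2]

theorem exists_strip {N : ℕ} {a δ x : ℝ} (hδ : 0 < δ) (hx : x ∈ Icc a (a + (N + 1) * δ)) :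
    ∃ i : Fin (N + 1), x ∈ Icc (a + i.val * δ) (a + (i.val + 1) * δ) := by
  obtain ⟨h1, h2⟩ := hx
  have h0 : 0 ≤ (x - a) / δ := div_nonneg (by linarith) hδ.le
  have hf := Nat.floor_le h0
  have hf' := Nat.lt_floor_add_one ((x - a) / δ)
  rw [le_div_iff₀ hδ] at hf
  rw [div_lt_iff₀ hδ] at hf'
  by_cases hN : ⌊(x - a) / δ⌋₊ < N + 1
  · exact ⟨⟨_, hN⟩, by simp only; linarith, by simp only; linarith⟩
  · refine ⟨Fin.last N, ?_, by simpa using h2⟩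
    have : ((N : ℝ) + 1) ≤ (⌊(x - a) / δ⌋₊ : ℝ) := by exact_mod_cast not_lt.1 hN
    have : (N : ℝ) * δ ≤ (⌊(x - a) / δ⌋₊ : ℝ) * δ := by
      apply mul_le_mul_of_nonneg_right _ hδ.le; linarith
    simp only [Fin.val_last]; linarith

theorem strip_near {a δ x : ℝ} (hδ : 0 < δ) {i j : ℕ}
    (hi : x ∈ Icc (a + i * δ) (a + (i + 1) * δ)) (hj : x ∈ Icc (a + j * δ) (a + (j + 1) * δ)) :
    i ≤ j + 1 := by
  have : (i : ℝ) * δ ≤ ((j : ℝ) + 1) * δ := by linarith [hi.1, hj.2]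
  have := le_of_mul_le_mul_right this hδ
  exact_mod_cast this

theorem gadj_right {N : ℕ} (i i' j : Fin (N + 1)) (h : i'.val = i.val + 1) :
    GAdj (i, j) (i', j) := by
  refine ⟨((i, j), (false, false)), ?_, rfl, ?_⟩
  · simp only [tseam, Finset.mem_filter, Finset.mem_univ, true_and, tseamP]
    rintro rfl
    have := i'.isLt; simp at h; omega
  · simp only [trev, tsrc, Prod.mk.injEq, and_true]
    apply Fin.ext
    rw [Fin.val_add_one_of_lt, h]
    rw [Fin.lt_def, Fin.val_last]; have := i'.isLt; omega

theorem gadj_up {N : ℕ} (i j j' : Fin (N + 1)) (h : j'.val = j.val + 1) :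
    GAdj (i, j) (i, j') := by
  refine ⟨((i, j), (true, false)), ?_, rfl, ?_⟩
  · simp only [tseam, Finset.mem_filter, Finset.mem_univ, true_and, tseamP]
    rintro rfl
    have := j'.isLt; simp at h; omega
  · simp only [trev, tsrc, Prod.mk.injEq, true_and]
    apply Fin.ext
    rw [Fin.val_add_one_of_lt, h]
    rw [Fin.lt_def, Fin.val_last]; have := j'.isLt; omega

/-- The squares that meet a connected set form a connected set in the grid. A separation of them
would split the set into two closed parts, which must meet in a common point of two squares; these
squares may touch only at a corner, in which case a third square there joins them. -/
theorem linked_cells {N : ℕ} {a δ : ℝ} (hδ : 0 < δ) {S : Set (ℝ × ℝ)} (hS : IsPreconnected S)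
    (hbox : S ⊆ Icc a (a + (N + 1) * δ) ×ˢ Icc a (a + (N + 1) * δ)) :
    Linked GAdj (cells N a δ S) := by
  intro P hP x hx y hy hPx
  by_contra hPy
  have hcl : ∀ R : Fin (N + 1) × Fin (N + 1) → Prop, IsClosed (⋃ p ∈ {p | R p}, cell a δ p) := by
    intro R
    exact (Set.toFinite _).isClosed_biUnion (fun p _ => isClosed_Icc.prod isClosed_Icc)
  have := isPreconnected_closed_iff.1 hS _ _ (hcl P) (hcl (fun p => ¬ P p)) (by
    intro z hz
    obtain ⟨h1, h2⟩ := hbox hz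
    obtain ⟨i, hi⟩ := exists_strip hδ h1
    obtain ⟨j, hj⟩ := exists_strip hδ h2
    by_cases hp : P (i, j)
    · left; exact mem_biUnion (x := (i, j)) hp ⟨hi, hj⟩
    · right; exact mem_biUnion (x := (i, j)) hp ⟨hi, hj⟩)
    (by
      obtain ⟨z, hz, hzx⟩ := hx
      exact ⟨z, hz, mem_biUnion (x := x) hPx hzx⟩)
    (by
      obtain ⟨z, hz, hzy⟩ := hy
      exact ⟨z, hz, mem_biUnion (x := y) hPy hzy⟩)
  obtain ⟨z, hz, h1, h2⟩ := this
  simp only [mem_iUnion, exists_prop] at h1 h2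
  obtain ⟨⟨i, j⟩, hp, hzi, hzj⟩ := h1
  obtain ⟨⟨i', j'⟩, hp', hzi', hzj'⟩ := h2
  have m1 : (i, j) ∈ cells N a δ S := ⟨z, hz, hzi, hzj⟩
  have m2 : (i', j) ∈ cells N a δ S := ⟨z, hz, hzi', hzj⟩
  have m3 : (i', j') ∈ cells N a δ S := ⟨z, hz, hzi', hzj'⟩
  have n1 := strip_near hδ hzi hzi'
  have n2 := strip_near hδ hzi' hzi
  have n3 := strip_near hδ hzj hzj'
  have n4 := strip_near hδ hzj' hzj
  simp only at n1 n2 n3 n4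
  have p2 : P (i', j) := by
    rcases (by omega : i'.val = i.val ∨ i'.val = i.val + 1 ∨ i.val = i'.val + 1) with h | h | h
    · rwa [Fin.ext h]
    · exact hP _ m1 _ m2 (gadj_right _ _ _ h) hp
    · exact hP _ m1 _ m2 (gadj_right _ _ _ h).symm hp
  have p3 : P (i', j') := by
    rcases (by omega : j'.val = j.val ∨ j'.val = j.val + 1 ∨ j.val = j'.val + 1) with h | h | h
    · rwa [Fin.ext h]
    · exact hP _ m2 _ m3 (gadj_up _ _ _ h) p2
    · exact hP _ m2 _ m3 (gadj_up _ _ _ h).symm p2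
  exact hp' p3

/-- Disjoint members of a finite family of compact sets are uniformly separated. -/
theorem exists_sep {J : Type*} [Finite J] (B : J → Set (ℝ × ℝ)) (hB : ∀ i, IsCompact (B i)) :
    ∃ δ : ℝ, 0 < δ ∧ ∀ i j, ∀ x ∈ B i, ∀ y ∈ B j, dist x y ≤ δ → (B i ∩ B j).Nonempty := by
  have : ∀ i j, ∀ᶠ δ in nhdsWithin (0 : ℝ) (Ioi 0),
      ∀ x ∈ B i, ∀ y ∈ B j, dist x y ≤ δ → (B i ∩ B j).Nonempty := by
    intro i j
    by_cases h : Disjoint (B i) (B j)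
    · obtain ⟨ε, hε, hd⟩ := h.exists_thickenings (hB i) (hB j).isClosed
      filter_upwards [Ioo_mem_nhdsGT hε] with δ hδ x hx y hy hxy
      exfalso
      refine Set.disjoint_left.1 hd (Metric.self_subset_thickening hε _ hx) ?_
      exact Metric.mem_thickening_iff.2 ⟨y, hy, lt_of_le_of_lt hxy hδ.2⟩
    · exact Filter.Eventually.of_forall fun _ _ _ _ _ _ => Set.not_disjoint_iff_nonempty_inter.1 h
  have h2 : ∀ᶠ δ in nhdsWithin (0 : ℝ) (Ioi 0), ∀ i j,
      ∀ x ∈ B i, ∀ y ∈ B j, dist x y ≤ δ → (B i ∩ B j).Nonempty := by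
    simpa only [Filter.eventually_all] using this
  obtain ⟨δ, h3, h4⟩ := (h2.and self_mem_nhdsWithin).exists
  exact ⟨δ, h4, h3⟩

/-- The continuous version of `grid_map`: compact connected sets in the plane with connecting arcs
yield a plane map. The squares have side at most the separation of the sets, so that disjoint sets
meet disjoint families of squares. -/
theorem plane_map {V K Dt : Type*} [Fintype V] [Fintype K] [Fintype Dt] [Nonempty Dt]
    (v : Dt → V) (κ : Dt → K) (hvκ : ∀ a b, v a = v b → κ a = κ b → a = b)
    (A : V ⊕ K → Set (ℝ × ℝ)) (hAc : ∀ i, IsCompact (A i)) (hAp : ∀ i, IsPreconnected (A i))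
    (hAd : ∀ i j x, x ∈ A i → x ∈ A j → i = j)
    (C : Dt → Set (ℝ × ℝ)) (hCc : ∀ d, IsCompact (C d)) (hCp : ∀ d, IsPreconnected (C d))
    (hCd : ∀ d d' x, x ∈ C d → x ∈ C d' → d = d')
    (hCa : ∀ d, (C d ∩ A (Sum.inl (v d))).Nonempty)
    (hCb : ∀ d, (C d ∩ A (Sum.inr (κ d))).Nonempty)
    (hCA : ∀ d i x, x ∈ C d → x ∈ A i → i = Sum.inl (v d) ∨ i = Sum.inr (κ d)) :
    ∃ (N : ℕ) (s ρ : Dt → Dt) (h : Dt → Fin (N + 1) × Fin (N + 1)), PlaneMap v κ s ρ h := by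
  let B : (V ⊕ K) ⊕ Dt → Set (ℝ × ℝ) := Sum.elim A C
  have hBc : ∀ i, IsCompact (B i) := by
    rintro (i | d)
    · exact hAc i
    · exact hCc d
  obtain ⟨δ, hδ, hsep⟩ := exists_sep B hBc
  obtain ⟨R, hR⟩ := (isCompact_iUnion hBc).isBounded.subset_closedBall (0 : ℝ × ℝ)
  obtain ⟨N, hN⟩ := exists_nat_gt ((R + R) / δ)
  rw [div_lt_iff₀ hδ] at hN
  have hbox : ∀ i, B i ⊆ Icc (-R) (-R + (N + 1) * δ) ×ˢ Icc (-R) (-R + (N + 1) * δ) := by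
    intro i x hx
    have := hR (mem_iUnion.2 ⟨i, hx⟩)
    rw [Metric.mem_closedBall, dist_zero_right, Prod.norm_def, max_le_iff, Real.norm_eq_abs,
      Real.norm_eq_abs, abs_le, abs_le] at this
    refine ⟨⟨this.1.1, ?_⟩, this.2.1, ?_⟩ <;> nlinarith [this.1.2, this.2.2]
  have hne : ∀ i, B i ⊆ ⋃ p : Fin (N + 1) × Fin (N + 1), cell (-R) δ p := by
    intro i x hx
    obtain ⟨h1, h2⟩ := hbox i hx
    obtain ⟨a, ha⟩ := exists_strip hδ h1
    obtain ⟨b, hb⟩ := exists_strip hδ h2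
    exact mem_iUnion.2 ⟨(a, b), ha, hb⟩
  have hmeet : ∀ i j, (B i ∩ B j).Nonempty →
      (cells N (-R) δ (B i) ∩ cells N (-R) δ (B j)).Nonempty := by
    rintro i j ⟨x, hx, hx'⟩
    obtain ⟨p, hp⟩ := mem_iUnion.1 (hne i hx)
    exact ⟨p, ⟨x, hx, hp⟩, x, hx', hp⟩
  have hshare : ∀ i j p, p ∈ cells N (-R) δ (B i) → p ∈ cells N (-R) δ (B j) →
      (B i ∩ B j).Nonempty := by
    intro i j p hi hj
    obtain ⟨x, hx, y, hy, hxy⟩ := cells_inter hi hj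
    exact hsep i j x hx y hy hxy
  refine ⟨N, grid_map N v κ hvκ ?_ (fun i => cells N (-R) δ (A i)) ?_ ?_
    (fun d => cells N (-R) δ (C d)) ?_ ?_ ?_ ?_ ?_⟩
  · have := linked_cells (N := N) (a := -R) hδ
      (((convex_Icc (-R) (-R + (N + 1) * δ)).prod (convex_Icc (-R) (-R + (N + 1) * δ))).isPreconnected)
      (subset_refl _)
    convert this
    symm
    rw [eq_univ_iff_forall]
    rintro ⟨i, j⟩
    have h1 : ∀ i : Fin (N + 1), -R + (i.val : ℝ) * δ ∈ Icc (-R) (-R + (N + 1) * δ) := by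
      intro i
      have h1 : (i.val : ℝ) ≤ N + 1 := by exact_mod_cast i.isLt.le
      constructor
      · have : 0 ≤ (i.val : ℝ) * δ := by positivity
        linarith
      · have := mul_le_mul_of_nonneg_right h1 hδ.le
        linarith
    refine ⟨(-R + (i.val : ℝ) * δ, -R + (j.val : ℝ) * δ), ⟨h1 i, h1 j⟩, ⟨le_rfl, ?_⟩, le_rfl, ?_⟩ <;>
      simp only <;> linarith
  · intro i; exact linked_cells hδ (hAp i) (hbox (Sum.inl i))
  · intro i j p hi hj
    obtain ⟨x, hx, hx'⟩ := hshare (Sum.inl i) (Sum.inl j) p hi hj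
    exact hAd i j x hx hx'
  · intro d; exact linked_cells hδ (hCp d) (hbox (Sum.inr d))
  · intro i j p hi hj
    obtain ⟨x, hx, hx'⟩ := hshare (Sum.inr i) (Sum.inr j) p hi hj
    exact hCd i j x hx hx'
  · intro d; exact hmeet (Sum.inr d) (Sum.inl _) (hCa d)
  · intro d; exact hmeet (Sum.inr d) (Sum.inl _) (hCb d)
  · intro d i p hd hi
    obtain ⟨x, hx, hy⟩ := hshare (Sum.inr d) (Sum.inl i) p hd hi
    exact hCA d i x hx hy

/-! ### Oriented edge curves -/

/-- The edge curves of a drawing, parametrised once from each end: `Γ d` runs from `d.fst` to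
`d.snd`, and `Γ d.symm` is its reverse. -/
structure DartCurves {V : Type*} (G : SimpleGraph V) (pos : V → ℝ × ℝ)
    (Γ : G.Dart → ℝ → ℝ × ℝ) : Prop where
  pos_inj : Function.Injective pos
  start : ∀ d, Γ d 0 = pos d.fst
  symm : ∀ d t, Γ d.symm t = Γ d (1 - t)
  cont : ∀ d, ContinuousOn (Γ d) (Icc 0 1)
  inj : ∀ d, InjOn (Γ d) (Icc 0 1)
  interior : ∀ d, ∀ t ∈ Ioo (0 : ℝ) 1, ∀ v, Γ d t ≠ pos v
  finite : ∀ d d', d.edge ≠ d'.edge → (Γ d '' Icc 0 1 ∩ (Γ d') '' Icc 0 1).Finite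

/-- The edges of `d` and `d'` are distinct and cross. -/
def DCross {V : Type*} {G : SimpleGraph V} (Γ : G.Dart → ℝ → ℝ × ℝ) (d d' : G.Dart) : Prop :=
  d.edge ≠ d'.edge ∧ ∃ t ∈ Ioo (0 : ℝ) 1, ∃ t' ∈ Ioo (0 : ℝ) 1, Γ d t = Γ d' t'

theorem Drawing.exists_dartCurves {V : Type*} {G : SimpleGraph V} (D : Drawing G)
    (hD : D.IsAlmostPlanar) :
    ∃ Γ : G.Dart → ℝ → ℝ × ℝ, DartCurves G D.pos Γ ∧
      ∀ d a b, DCross Γ d a → DCross Γ d b → a.edge = b.edge := by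
  classical
  let E : G.Dart → G.edgeSet := fun d => ⟨d.edge, d.edge_mem⟩
  let Γ : G.Dart → ℝ → ℝ × ℝ := fun d t =>
    if D.curve (E d) 0 = D.pos d.fst then D.curve (E d) t else D.curve (E d) (1 - t)
  have hE : ∀ d d', E d = E d' ↔ d.edge = d'.edge := fun d d' => Subtype.ext_iff
  have hEs : ∀ d, E d.symm = E d := fun d => (hE _ _).2 d.edge_symm
  have ends : ∀ d : G.Dart, (D.curve (E d) 0 = D.pos d.fst ∧ D.curve (E d) 1 = D.pos d.snd) ∨
      (D.curve (E d) 0 = D.pos d.snd ∧ D.curve (E d) 1 = D.pos d.fst) := by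
    intro d
    obtain ⟨a, b, hab, h0, h1⟩ := D.curve_ends (E d)
    have : s(d.fst, d.snd) = s(a, b) := hab
    rcases Sym2.eq_iff.1 this with ⟨rfl, rfl⟩ | ⟨rfl, rfl⟩
    · exact Or.inl ⟨h0, h1⟩
    · exact Or.inr ⟨h0, h1⟩
  have neg : ∀ d : G.Dart, D.pos d.snd ≠ D.pos d.fst := fun d h => d.snd_ne_fst (D.pos_inj h)
  -- in either orientation a point of `Γ d` is a point of the curve, with controlled parameter
  have cases : ∀ d, (∀ t, Γ d t = D.curve (E d) t) ∨ (∀ t, Γ d t = D.curve (E d) (1 - t)) := by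
    intro d
    by_cases h : D.curve (E d) 0 = D.pos d.fst
    · exact Or.inl fun t => if_pos h
    · exact Or.inr fun t => if_neg h
  have toC : ∀ d, ∀ t ∈ Icc (0 : ℝ) 1, ∃ u ∈ Icc (0 : ℝ) 1, Γ d t = D.curve (E d) u := by
    intro d t ht
    rcases cases d with h | h
    · exact ⟨t, ht, h t⟩
    · exact ⟨1 - t, ⟨by linarith [ht.2], by linarith [ht.1]⟩, h t⟩
  have toO : ∀ d, ∀ t ∈ Ioo (0 : ℝ) 1, ∃ u ∈ Ioo (0 : ℝ) 1, Γ d t = D.curve (E d) u := by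
    intro d t ht
    rcases cases d with h | h
    · exact ⟨t, ht, h t⟩
    · exact ⟨1 - t, ⟨by linarith [ht.2], by linarith [ht.1]⟩, h t⟩
  have toX : ∀ d d', DCross Γ d d' → D.Crosses (E d) (E d') := by
    rintro d d' ⟨hne, t, ht, t', ht', heq⟩
    obtain ⟨u, hu, h1⟩ := toO d t ht
    obtain ⟨u', hu', h2⟩ := toO d' t' ht'
    exact ⟨fun h => hne ((hE _ _).1 h), Γ d t, ⟨u, hu, h1.symm⟩, u', hu', by rw [heq, h2]⟩
  refine ⟨Γ, ⟨D.pos_inj, ?_, ?_, ?_, ?_, ?_, ?_⟩, ?_⟩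
  · intro d
    by_cases h : D.curve (E d) 0 = D.pos d.fst
    · simp only [Γ, if_pos h]; exact h
    · simp only [Γ, if_neg h, sub_zero]
      rcases ends d with h' | h'
      · exact absurd h'.1 h
      · exact h'.2
  · intro d t
    have hs : d.symm.fst = d.snd := rfl
    rcases ends d with h | h
    · have h1 : ¬ D.curve (E d.symm) 0 = D.pos d.symm.fst := by
        rw [hEs, hs, h.1]; exact (neg d).symm
      simp only [Γ, if_pos h.1, if_neg h1, hEs]
    · have h1 : D.curve (E d.symm) 0 = D.pos d.symm.fst := by
        rw [hEs, hs, h.1]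
      have h2 : ¬ D.curve (E d) 0 = D.pos d.fst := by rw [h.1]; exact neg d
      simp only [Γ, if_neg h2, if_pos h1, hEs, sub_sub_cancel]
  · intro d
    rcases cases d with h | h
    · exact (D.curve_cont (E d)).congr fun t _ => h t
    · refine ContinuousOn.congr ?_ fun t _ => h t
      refine (D.curve_cont (E d)).comp (by fun_prop) ?_
      intro t ht
      exact ⟨by linarith [ht.2], by linarith [ht.1]⟩
  · intro d t ht u hu htu
    rcases cases d with h | h
    · rw [h, h] at htu; exact D.curve_inj _ ht hu htu
    · rw [h, h] at htu
      have := D.curve_inj _ (x₁ := 1 - t) (x₂ := 1 - u) ⟨by linarith [ht.2], by linarith [ht.1]⟩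
        ⟨by linarith [hu.2], by linarith [hu.1]⟩ htu
      linarith
  · intro d t ht v hv
    obtain ⟨u, hu, h⟩ := toO d t ht
    exact D.interior_no_vertex _ u hu v (h ▸ hv)
  · intro d d' hne
    refine (D.finite_meet (E d) (E d') (fun h => hne ((hE _ _).1 h))).subset ?_
    rintro x ⟨⟨t, ht, rfl⟩, t', ht', hx⟩
    obtain ⟨u, hu, h1⟩ := toC d t ht
    obtain ⟨u', hu', h2⟩ := toC d' t' ht'
    exact ⟨⟨u, hu, h1.symm⟩, u', hu', by rw [← hx, h2]⟩
  · intro d a b ha hb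
    exact (hE _ _).1 (hD _ _ _ (toX d a ha) (toX d b hb))

/-- There is a uniform `η` such that all crossings are at parameter distance more than `4 η` from
the ends of the curves. -/
theorem DartCurves.exists_margin {V : Type*} [Finite V] {G : SimpleGraph V} {pos : V → ℝ × ℝ}
    {Γ : G.Dart → ℝ → ℝ × ℝ} (H : DartCurves G pos Γ) :
    ∃ η : ℝ, 0 < η ∧ η < 1 / 10 ∧ ∀ d d' : G.Dart, d.edge ≠ d'.edge → ∀ t ∈ Ioo (0 : ℝ) 1,
      Γ d t ∈ (Γ d') '' Icc 0 1 → 4 * η < t ∧ t < 1 - 4 * η := by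
  have hfin : Finite G.Dart := Finite.of_injective _ SimpleGraph.Dart.toProd_injective
  have h1 : ∀ d d' : G.Dart, d.edge ≠ d'.edge → ∀ᶠ η in nhdsWithin (0 : ℝ) (Ioi 0),
      ∀ t ∈ Ioo (0 : ℝ) 1, Γ d t ∈ (Γ d') '' Icc 0 1 → 4 * η < t ∧ t < 1 - 4 * η := by
    intro d d' hne
    have hF : {t | t ∈ Ioo (0 : ℝ) 1 ∧ Γ d t ∈ (Γ d') '' Icc 0 1}.Finite := by
      refine Set.Finite.of_finite_image ((H.finite d d' hne).subset ?_)
        ((H.inj d).mono fun t ht => Ioo_subset_Icc_self ht.1)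
      rintro x ⟨t, ht, rfl⟩
      exact ⟨⟨t, Ioo_subset_Icc_self ht.1, rfl⟩, ht.2⟩
    have : ∀ᶠ η in nhdsWithin (0 : ℝ) (Ioi 0),
        ∀ t ∈ {t | t ∈ Ioo (0 : ℝ) 1 ∧ Γ d t ∈ (Γ d') '' Icc 0 1}, 4 * η < t ∧ t < 1 - 4 * η := by
      rw [Filter.eventually_all_finite hF]
      rintro t ⟨ht, -⟩
      have hpos : 0 < min t (1 - t) / 4 := by
        have : 0 < min t (1 - t) := lt_min ht.1 (by linarith [ht.2])
        linarith
      filter_upwards [Ioo_mem_nhdsGT hpos] with η hη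
      have h3 := hη.2
      constructor
      · linarith [min_le_left t (1 - t)]
      · linarith [min_le_right t (1 - t)]
    filter_upwards [this] with η hη t ht htx using hη t ⟨ht, htx⟩
  have h2 : ∀ᶠ η in nhdsWithin (0 : ℝ) (Ioi 0), ∀ d d' : G.Dart, d.edge ≠ d'.edge →
      ∀ t ∈ Ioo (0 : ℝ) 1, Γ d t ∈ (Γ d') '' Icc 0 1 → 4 * η < t ∧ t < 1 - 4 * η := by
    rw [Filter.eventually_all]; intro d
    rw [Filter.eventually_all]; intro d'
    by_cases hne : d.edge ≠ d'.edge
    · filter_upwards [h1 d d' hne] with η hη _ using hη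
    · exact Filter.Eventually.of_forall fun η h => absurd h hne
  obtain ⟨η, h3, h4⟩ := (h2.and (Ioo_mem_nhdsGT (show (0 : ℝ) < 1 / 10 by norm_num))).exists
  exact ⟨η, h4.1, h4.2, h3⟩

/-- The ways in which two parametrised edges can coincide at a point: same edge, a common endpoint,
or a crossing away from the ends. -/
theorem DartCurves.meet {V : Type*} {G : SimpleGraph V} {pos : V → ℝ × ℝ}
    {Γ : G.Dart → ℝ → ℝ × ℝ} (H : DartCurves G pos Γ) {η : ℝ}
    (hη : ∀ d d' : G.Dart, d.edge ≠ d'.edge → ∀ t ∈ Ioo (0 : ℝ) 1,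
      Γ d t ∈ (Γ d') '' Icc 0 1 → 4 * η < t ∧ t < 1 - 4 * η)
    {d d' : G.Dart} {t t' : ℝ} (ht : t ∈ Icc (0 : ℝ) 1) (ht' : t' ∈ Icc (0 : ℝ) 1)
    (heq : Γ d t = Γ d' t') :
    (d = d' ∧ t = t') ∨ (d' = d.symm ∧ t' = 1 - t) ∨
    ((t = 0 ∨ t = 1) ∧ (t' = 0 ∨ t' = 1)) ∨
    (DCross Γ d d' ∧ (4 * η < t ∧ t < 1 - 4 * η) ∧ (4 * η < t' ∧ t' < 1 - 4 * η)) := by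
  have hend : ∀ d, ∀ t ∈ Icc (0 : ℝ) 1, (t = 0 ∨ t = 1) → ∃ v, Γ d t = pos v := by
    rintro d t - (rfl | rfl)
    · exact ⟨_, H.start d⟩
    · refine ⟨d.snd, ?_⟩
      have := H.symm d 0
      rw [sub_zero] at this
      rw [← this, H.start]; rfl
  have hio : ∀ t ∈ Icc (0 : ℝ) 1, (t = 0 ∨ t = 1) ∨ t ∈ Ioo (0 : ℝ) 1 := by
    intro t ht
    by_cases a : t = 0
    · exact Or.inl (Or.inl a)
    by_cases b : t = 1
    · exact Or.inl (Or.inr b)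
    · exact Or.inr ⟨lt_of_le_of_ne ht.1 (Ne.symm a), lt_of_le_of_ne ht.2 b⟩
  by_cases he : d.edge = d'.edge
  · rcases (SimpleGraph.dart_edge_eq_iff d' d).1 he.symm with h | h
    · subst h; left; exact ⟨rfl, H.inj _ ht ht' heq⟩
    · subst h; right; left
      refine ⟨rfl, ?_⟩
      rw [H.symm] at heq
      have := H.inj _ ht (show 1 - t' ∈ Icc (0 : ℝ) 1 from
        ⟨by linarith [ht'.2], by linarith [ht'.1]⟩) heq
      linarith
  · right; right
    rcases hio t ht with h1 | h1
    · left
      refine ⟨h1, ?_⟩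
      rcases hio t' ht' with h2 | h2
      · exact h2
      · obtain ⟨v, hv⟩ := hend d t ht h1
        exact absurd (heq ▸ hv) (H.interior d' t' h2 v)
    · right
      have h2 : t' ∈ Ioo (0 : ℝ) 1 := by
        rcases hio t' ht' with h2 | h2
        · obtain ⟨v, hv⟩ := hend d' t' ht' h2
          exact absurd (heq.trans hv) (H.interior d t h1 v)
        · exact h2
      exact ⟨⟨he, t, h1, t', h2, heq⟩, hη d d' he t h1 ⟨t', ht', heq.symm⟩,
        hη d' d (Ne.symm he) t' h2 ⟨t, ht, heq⟩⟩

/-! ### The plane map of an almost planar drawing -/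

universe u

section
variable {V : Type u} {G : SimpleGraph V} {pos : V → ℝ × ℝ} {Γ : G.Dart → ℝ → ℝ × ℝ}

theorem DCross.comm {d d' : G.Dart} (h : DCross Γ d d') : DCross Γ d' d := by
  obtain ⟨hne, t, ht, t', ht', heq⟩ := h
  exact ⟨hne.symm, t', ht', t, ht, heq.symm⟩

theorem DartCurves.cross_symm (H : DartCurves G pos Γ) {d d' : G.Dart} (h : DCross Γ d d') :
    DCross Γ d d'.symm := by
  obtain ⟨hne, t, ht, t', ht', heq⟩ := h
  refine ⟨by rwa [SimpleGraph.Dart.edge_symm], t, ht, 1 - t',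
    ⟨by linarith [ht'.2], by linarith [ht'.1]⟩, ?_⟩
  rw [H.symm, sub_sub_cancel, heq]

theorem DartCurves.cross_congr (H : DartCurves G pos Γ) {d a b : G.Dart} (h : DCross Γ d a)
    (hab : a.edge = b.edge) : DCross Γ d b := by
  rcases (SimpleGraph.dart_edge_eq_iff b a).1 hab.symm with rfl | rfl
  · exact h
  · exact H.cross_symm h

/-- The edges of `d` and `d'` cross and have no common endpoint. -/
def Indep (Γ : G.Dart → ℝ → ℝ × ℝ) (d d' : G.Dart) : Prop :=
  DCross Γ d d' ∧ d.fst ≠ d'.fst ∧ d.fst ≠ d'.snd ∧ d.snd ≠ d'.fst ∧ d.snd ≠ d'.snd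

theorem Indep.comm {d d' : G.Dart} (h : Indep Γ d d') : Indep Γ d' d :=
  ⟨h.1.comm, h.2.1.symm, h.2.2.2.1.symm, h.2.2.1.symm, h.2.2.2.2.symm⟩

theorem DartCurves.indep_congr (H : DartCurves G pos Γ) {d a b : G.Dart} (h : Indep Γ d a)
    (hab : a.edge = b.edge) : Indep Γ d b := by
  refine ⟨H.cross_congr h.1 hab, ?_⟩
  rcases (SimpleGraph.dart_edge_eq_iff b a).1 hab.symm with rfl | rfl
  · exact h.2
  · exact ⟨h.2.2.1, h.2.1, h.2.2.2.2, h.2.2.2.1⟩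

/-- Darts are equivalent if they belong to the same edge or to two edges that cross without having
a common endpoint. The classes are the vertices of the plane map that are not vertices of `G`. -/
def DartCurves.classes (H : DartCurves G pos Γ)
    (hAP : ∀ d a b, DCross Γ d a → DCross Γ d b → a.edge = b.edge) : Setoid G.Dart where
  r a b := a.edge = b.edge ∨ Indep Γ a b
  iseqv := by
    refine ⟨fun a => Or.inl rfl, ?_, ?_⟩
    · rintro a b (h | h)
      · exact Or.inl h.symm
      · exact Or.inr h.comm
    · rintro a b c (h | h) (h' | h')
      · exact Or.inl (h.trans h')
      · exact Or.inr (H.indep_congr h'.comm h.symm).comm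
      · exact Or.inr (H.indep_congr h h')
      · exact Or.inl (hAP b a c h.1.comm h'.1)

/-- The edge of `d` is crossed by an edge with the same initial vertex. Such crossings are put into
the star of that vertex. -/
def Absorbed (Γ : G.Dart → ℝ → ℝ × ℝ) (d : G.Dart) : Prop :=
  ∃ d', DCross Γ d d' ∧ d'.fst = d.fst

/-- A crossed edge is absorbed at no more than one of its ends, since distinct edges of a simple graph
have at most one common endpoint. -/
theorem absorbed_symm (H : DartCurves G pos Γ)
    (hAP : ∀ d a b, DCross Γ d a → DCross Γ d b → a.edge = b.edge) {d : G.Dart}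
    (h : Absorbed Γ d) : ¬ Absorbed Γ d.symm := by
  rintro ⟨b, hb, hb'⟩
  obtain ⟨a, ha, ha'⟩ := h
  have hb2 : DCross Γ d b := by
    have := (H.cross_symm hb.comm).comm
    rwa [SimpleGraph.Dart.symm_symm] at this
  have hbs : b.fst = d.snd := hb'
  rcases (SimpleGraph.dart_edge_eq_iff a b).1 (hAP d a b ha hb2) with h | h
  · rw [h] at ha'
    exact d.fst_ne_snd (ha'.symm.trans hbs)
  · apply hb2.1
    have h2 : b.snd = d.fst := by rw [h] at ha'; exact ha'
    rw [SimpleGraph.Dart.edge, SimpleGraph.Dart.edge, hbs, h2, Sym2.eq_swap]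

/-- An absorbed dart has its initial vertex in common with every edge that it crosses. -/
theorem absorbed_cross (hAP : ∀ d a b, DCross Γ d a → DCross Γ d b → a.edge = b.edge)
    {d d' : G.Dart} (h : Absorbed Γ d) (hx : DCross Γ d d') : d'.fst = d.fst ∨ d'.snd = d.fst := by
  obtain ⟨a, ha, ha'⟩ := h
  rcases (SimpleGraph.dart_edge_eq_iff a d').1 (hAP d a d' ha hx) with h | h
  · left; rw [← h, ha']
  · right; rw [h] at ha'; exact ha'

open Classical in
/-- The length of the initial part of `Γ d` that belongs to the star of `d.fst`. For an absorbed
dart it reaches beyond all crossings. -/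
noncomputable def alpha (Γ : G.Dart → ℝ → ℝ × ℝ) (η : ℝ) (d : G.Dart) : ℝ :=
  if Absorbed Γ d then 1 - 4 * η else η

/-- The plane map of an almost planar drawing: its edges are the darts of `G`, and every class of
darts consists of the two darts of one edge or of the four darts of two edges without common
endpoint. -/
theorem exists_planeMap [Fintype V] [DecidableEq V] [DecidableRel G.Adj] [Nonempty G.Dart]
    (H : DartCurves G pos Γ)
    (hAP : ∀ d a b, DCross Γ d a → DCross Γ d b → a.edge = b.edge) :
    ∃ (K : Type u) (_ : Fintype K) (κ : G.Dart → K) (N : ℕ) (s ρ : G.Dart → G.Dart)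
      (h : G.Dart → Fin (N + 1) × Fin (N + 1)), PlaneMap (fun d : G.Dart => d.fst) κ s ρ h ∧
      Function.Surjective κ ∧ (∀ d, κ d.symm = κ d) ∧
      ∀ d, (∀ d', κ d' = κ d → d' = d ∨ d' = d.symm) ∨
        ∃ x : G.Dart, (d.fst ≠ x.fst ∧ d.fst ≠ x.snd ∧ d.snd ≠ x.fst ∧ d.snd ≠ x.snd) ∧
          ∀ d', κ d' = κ d ↔ (d' = d ∨ d' = d.symm ∨ d' = x ∨ d' = x.symm) := by
  classical
  obtain ⟨η, h0, h10, hη⟩ := H.exists_margin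
  set α : G.Dart → ℝ := alpha Γ η with hα
  have αA : ∀ d, Absorbed Γ d → α d = 1 - 4 * η := fun d h => if_pos h
  have αN : ∀ d, ¬ Absorbed Γ d → α d = η := fun d h => if_neg h
  have αc : ∀ d, (Absorbed Γ d ∧ α d = 1 - 4 * η) ∨ (¬ Absorbed Γ d ∧ α d = η) := by
    intro d; by_cases h : Absorbed Γ d
    · exact Or.inl ⟨h, αA d h⟩
    · exact Or.inr ⟨h, αN d h⟩
  have αb : ∀ d, η ≤ α d ∧ α d ≤ 1 - 4 * η := by
    intro d; rcases αc d with h | h <;> rw [h.2] <;> constructor <;> linarith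
  have αs : ∀ d : G.Dart, α d + α d.symm ≤ 1 - 3 * η := by
    intro d
    by_cases h : Absorbed Γ d
    · rw [αA d h, αN _ (absorbed_symm H hAP h)]; linarith
    · rw [αN d h]; linarith [(αb d.symm).2]
  let st := H.classes hAP
  let κ : G.Dart → Quotient st := fun d => Quotient.mk st d
  have κeq : ∀ a b, κ a = κ b ↔ (a.edge = b.edge ∨ Indep Γ a b) := fun a b => Quotient.eq
  have κsymm : ∀ d : G.Dart, κ d.symm = κ d := fun d => (κeq _ _).2 (Or.inl d.edge_symm)
  have κcl : ∀ d, (∀ d', κ d' = κ d → d' = d ∨ d' = d.symm) ∨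
        ∃ x : G.Dart, (d.fst ≠ x.fst ∧ d.fst ≠ x.snd ∧ d.snd ≠ x.fst ∧ d.snd ≠ x.snd) ∧
          ∀ d', κ d' = κ d ↔ (d' = d ∨ d' = d.symm ∨ d' = x ∨ d' = x.symm) := by
    intro d
    by_cases hx : ∃ x, Indep Γ d x
    · obtain ⟨x, hx⟩ := hx
      right
      refine ⟨x, hx.2, fun d' => ?_⟩
      rw [κeq]
      constructor
      · rintro (h | h)
        · rcases (SimpleGraph.dart_edge_eq_iff d' d).1 h with h | h <;> simp [h]
        · rcases (SimpleGraph.dart_edge_eq_iff d' x).1 (hAP d d' x h.1.comm hx.1) with h | h <;>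
            simp [h]
      · rintro (rfl | rfl | rfl | rfl)
        · exact Or.inl rfl
        · exact Or.inl (SimpleGraph.Dart.edge_symm _)
        · exact Or.inr hx.comm
        · exact Or.inr (H.indep_congr hx (SimpleGraph.Dart.edge_symm _).symm).comm
    · left
      intro d' hd'
      rcases (κeq d' d).1 hd' with h | h
      · exact (SimpleGraph.dart_edge_eq_iff d' d).1 h
      · exact absurd ⟨d', h.comm⟩ hx
  have hvκ : ∀ a b : G.Dart, a.fst = b.fst → κ a = κ b → a = b := by
    intro a b hab hk
    rcases (κeq a b).1 hk with h | h
    · rcases (SimpleGraph.dart_edge_eq_iff a b).1 h with h | h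
      · exact h
      · rw [h] at hab; exact absurd hab b.snd_ne_fst
    · exact absurd hab h.2.1
  -- Each dart curve is cut at `α d` and `α d + η`: the part before belongs to the star `At` of its
  -- initial vertex, the arc between the cuts is the connector `C`, and what remains between the
  -- connectors from both ends belongs to the core `Core` of its class.
  let arc : G.Dart → ℝ → ℝ → Set (ℝ × ℝ) := fun d a b => Γ d '' Icc a b
  have arcC : ∀ d a b, 0 ≤ a → b ≤ 1 → IsCompact (arc d a b) := fun d a b ha hb =>
    isCompact_Icc.image_of_continuousOn ((H.cont d).mono (Icc_subset_Icc ha hb))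
  have arcP : ∀ d a b, 0 ≤ a → b ≤ 1 → IsPreconnected (arc d a b) := fun d a b ha hb =>
    isPreconnected_Icc.image _ ((H.cont d).mono (Icc_subset_Icc ha hb))
  let At : V → Set (ℝ × ℝ) := fun v =>
    {pos v} ∪ ⋃ d ∈ {d : G.Dart | d.fst = v}, arc d 0 (α d)
  let Core : Quotient st → Set (ℝ × ℝ) := fun k =>
    ⋃ d ∈ {d : G.Dart | κ d = k}, arc d (α d + η) (1 - α d.symm - η)
  let A : V ⊕ Quotient st → Set (ℝ × ℝ) := Sum.elim At Core
  let C : G.Dart → Set (ℝ × ℝ) := fun d => arc d (α d) (α d + η)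
  have memAt : ∀ v x, x ∈ At v ↔ (x = pos v ∨ ∃ d : G.Dart, d.fst = v ∧
      ∃ t ∈ Icc 0 (α d), Γ d t = x) := by
    intro v x; simp [At, arc]
  have memCore : ∀ k x, x ∈ Core k ↔ ∃ d, κ d = k ∧
      ∃ t ∈ Icc (α d + η) (1 - α d.symm - η), Γ d t = x := by
    intro k x; simp [Core, arc]
  have memC : ∀ d x, x ∈ C d ↔ ∃ t ∈ Icc (α d) (α d + η), Γ d t = x := fun d x => Iff.rfl
  have posΓ : ∀ d t v, 0 < t → t < 1 → Γ d t ≠ pos v := fun d t v h h' =>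
    H.interior d t ⟨h, h'⟩ v
  -- an edge that meets another one within its core has no common endpoint with it
  have coreX : ∀ d d' t, DCross Γ d d' → t ∈ Icc (α d + η) (1 - α d.symm - η) →
      4 * η < t → t < 1 - 4 * η → Indep Γ d d' := by
    intro d d' t hx ht h1 h2
    have n1 : ¬ Absorbed Γ d := fun h => by have := αA d h; linarith [ht.1]
    have n2 : ¬ Absorbed Γ d.symm := fun h => by have := αA _ h; linarith [ht.2]
    have hx' : DCross Γ d.symm d' := (H.cross_symm hx.comm).comm
    exact ⟨hx, fun h => n1 ⟨d', hx, h.symm⟩, fun h => n1 ⟨d'.symm, H.cross_symm hx, h.symm⟩,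
      fun h => n2 ⟨d', hx', h.symm⟩, fun h => n2 ⟨d'.symm, H.cross_symm hx', h.symm⟩⟩
  have AA : ∀ v w x, x ∈ At v → x ∈ At w → v = w := by
    have aux : ∀ (d : G.Dart) t v, t ∈ Icc 0 (α d) → Γ d t = pos v → d.fst = v := by
      intro d t v ht hv
      rcases ht.1.eq_or_lt with h | h
      · rw [← h, H.start] at hv; exact H.pos_inj hv
      · exact absurd hv (posΓ d t v h (by linarith [ht.2, (αb d).2]))
    intro v w x hv hw
    rcases (memAt v x).1 hv with rfl | ⟨d, rfl, t, ht, rfl⟩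
    · rcases (memAt w _).1 hw with h | ⟨d, rfl, t, ht, h⟩
      · exact H.pos_inj h
      · exact (aux d t v ht h).symm
    · rcases (memAt w _).1 hw with h | ⟨d', rfl, t', ht', heq⟩
      · exact aux d t w ht h
      · have b1 := αb d
        have b2 := αb d'
        rcases H.meet hη (d := d) (d' := d') (t := t) (t' := t') ⟨ht.1, by linarith [ht.2]⟩
          ⟨ht'.1, by linarith [ht'.2]⟩ heq.symm with h | h | h | h
        · rw [h.1]
        · exfalso
          have := αs d
          rw [← h.1] at this
          linarith [ht.2, ht'.2, h.2]
        · have e1 : t = 0 := h.1.resolve_right (by intro hh; linarith [ht.2])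
          have e2 : t' = 0 := h.2.resolve_right (by intro hh; linarith [ht'.2])
          subst e1; subst e2
          rw [H.start, H.start] at heq
          exact (H.pos_inj heq).symm
        · obtain ⟨hx, ⟨i1, i2⟩, i3, i4⟩ := h
          have a1 : Absorbed Γ d := by
            by_contra hn; have := αN d hn; linarith [ht.2]
          have a2 : Absorbed Γ d' := by
            by_contra hn; have := αN d' hn; linarith [ht'.2]
          rcases absorbed_cross hAP a1 hx with h | h
          · exact h.symm
          · rcases absorbed_cross hAP a2 hx.comm with h' | h'
            · exact h'
            · exfalso; apply hx.1
              rw [SimpleGraph.Dart.edge, SimpleGraph.Dart.edge, h, h', Sym2.eq_swap]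
  have ACore : ∀ v k x, x ∈ At v → x ∈ Core k → False := by
    intro v k x hv hk
    obtain ⟨d', hd', t', ht', rfl⟩ := (memCore k x).1 hk
    have b2 := αb d'
    have b3 := αb d'.symm
    have p1 : 0 < t' := by linarith [ht'.1]
    have p2 : t' < 1 := by linarith [ht'.2]
    rcases (memAt v _).1 hv with h | ⟨d, rfl, t, ht, h⟩
    · exact posΓ d' t' v p1 p2 h
    have b1 := αb d
    rcases H.meet hη (d := d') (d' := d) (t := t') (t' := t) ⟨p1.le, p2.le⟩
      ⟨ht.1, by linarith [ht.2]⟩ h.symm with h | h | h | h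
    · rw [h.1, h.2] at ht'; linarith [ht'.1, ht.2]
    · rw [← h.1] at ht'; linarith [ht'.2, ht.2, h.2]
    · rcases h.1 with h | h <;> linarith
    · obtain ⟨hx, ⟨i1, i2⟩, i3, i4⟩ := h
      have a1 : Absorbed Γ d := by
        by_contra hn; have := αN d hn; linarith [ht.2]
      have hi := coreX d' d t' hx ht' i1 i2
      rcases absorbed_cross hAP a1 hx.comm with h | h
      · exact hi.2.1 h
      · exact hi.2.2.2.1 h
  have CoreCore : ∀ k l x, x ∈ Core k → x ∈ Core l → k = l := by
    intro k l x hk hl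
    obtain ⟨d, rfl, t, ht, rfl⟩ := (memCore k x).1 hk
    obtain ⟨d', rfl, t', ht', h⟩ := (memCore l _).1 hl
    have b1 := αb d
    have b2 := αb d'
    have b3 := αb d.symm
    have b4 := αb d'.symm
    rcases H.meet hη (d := d) (d' := d') (t := t) (t' := t')
      ⟨by linarith [ht.1], by linarith [ht.2]⟩ ⟨by linarith [ht'.1], by linarith [ht'.2]⟩
      h.symm with h | h | h | h
    · rw [h.1]
    · rw [h.1, κsymm]
    · rcases h.1 with h | h <;> linarith [ht.1, ht.2]
    · exact (κeq _ _).2 (Or.inr (coreX d d' t h.1 ht h.2.1.1 h.2.1.2))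
  have noX : ∀ d t, t ∈ Icc (α d) (α d + η) → ¬ (4 * η < t ∧ t < 1 - 4 * η) := by
    rintro d t ht ⟨h1, h2⟩
    rcases αc d with h | h
    · linarith [ht.1, h.2]
    · linarith [ht.2, h.2]
  refine ⟨Quotient st, Fintype.ofFinite _, κ, ?_⟩
  have : ∃ (N : ℕ) (s ρ : G.Dart → G.Dart)
      (h : G.Dart → Fin (N + 1) × Fin (N + 1)), @PlaneMap _ _ _ _ _ _ (Fintype.ofFinite _) _
        (fun d : G.Dart => d.fst) κ s ρ h := by
    refine @plane_map _ _ _ _ (Fintype.ofFinite _) _ _ (fun d : G.Dart => d.fst) κ hvκ A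
      ?_ ?_ ?_ C ?_ ?_ ?_ ?_ ?_ ?_
    · rintro (v | k)
      · refine isCompact_singleton.union ((Set.toFinite _).isCompact_biUnion fun d _ => ?_)
        exact arcC d _ _ le_rfl (by linarith [(αb d).2])
      · refine (Set.toFinite _).isCompact_biUnion fun d _ => ?_
        exact arcC d _ _ (by linarith [(αb d).1]) (by linarith [(αb d.symm).1])
    · rintro (v | k)
      · refine isPreconnected_of_forall (pos v) ?_
        intro y hy
        rcases (memAt v y).1 hy with rfl | ⟨d, rfl, t, ht, rfl⟩
        · exact ⟨{pos v}, fun x hx => Or.inl hx, rfl, rfl, isPreconnected_singleton⟩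
        · refine ⟨arc d 0 (α d), ?_, ⟨0, ⟨le_rfl, by linarith [(αb d).1]⟩, H.start d⟩,
            ⟨t, ht, rfl⟩, arcP d _ _ le_rfl (by linarith [(αb d).2])⟩
          rintro x ⟨u, hu, rfl⟩
          exact (memAt _ _).2 (Or.inr ⟨d, rfl, u, hu, rfl⟩)
      · refine isPreconnected_of_forall_pair ?_
        intro x hx y hy
        obtain ⟨d, hd, t, ht, rfl⟩ := (memCore k x).1 hx
        obtain ⟨d', hd', t', ht', rfl⟩ := (memCore k y).1 hy
        have sub : ∀ d, κ d = k → arc d (α d + η) (1 - α d.symm - η) ⊆ Core k := by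
          rintro d hd _ ⟨u, hu, rfl⟩
          exact (memCore _ _).2 ⟨d, hd, u, hu, rfl⟩
        have pc : ∀ d : G.Dart, IsPreconnected (arc d (α d + η) (1 - α d.symm - η)) := fun d =>
          arcP d _ _ (by linarith [(αb d).1]) (by linarith [(αb d.symm).1])
        refine ⟨arc d (α d + η) (1 - α d.symm - η) ∪ arc d' (α d' + η) (1 - α d'.symm - η),
          union_subset (sub d hd) (sub d' hd'), Or.inl ⟨t, ht, rfl⟩, Or.inr ⟨t', ht', rfl⟩,
          IsPreconnected.union' ?_ (pc d) (pc d')⟩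
        rcases (κeq d d').1 (hd.trans hd'.symm) with h | h
        · rcases (SimpleGraph.dart_edge_eq_iff d' d).1 h.symm with rfl | rfl
          · exact ⟨Γ _ t, ⟨t, ht, rfl⟩, t, ht, rfl⟩
          · refine ⟨Γ d t, ⟨t, ht, rfl⟩, 1 - t, ?_, ?_⟩
            · rw [SimpleGraph.Dart.symm_symm]
              exact ⟨by linarith [ht.2], by linarith [ht.1]⟩
            · rw [H.symm, sub_sub_cancel]
        · have free : ∀ a b, Indep Γ a b → ¬ Absorbed Γ a := by
            intro a b hab hA
            rcases absorbed_cross hAP hA hab.1 with h | h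
            · exact hab.2.1 h.symm
            · exact hab.2.2.1 h.symm
          have free' : ∀ a b, Indep Γ a b → ¬ Absorbed Γ a.symm := fun a b hab =>
            free a.symm b (H.indep_congr hab.comm a.edge_symm.symm).comm
          obtain ⟨he, u, hu, u', hu', heq⟩ := h.1
          have m1 := hη d d' he u hu ⟨u', Ioo_subset_Icc_self hu', heq.symm⟩
          have m2 := hη d' d he.symm u' hu' ⟨u, Ioo_subset_Icc_self hu, heq⟩
          refine ⟨Γ d u, ⟨u, ?_, rfl⟩, u', ?_, heq.symm⟩
          · rw [αN d (free _ _ h), αN _ (free' _ _ h)]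
            constructor <;> linarith
          · rw [αN d' (free _ _ h.comm), αN _ (free' _ _ h.comm)]
            constructor <;> linarith
    · rintro (v | k) (w | l) x hx hy
      · exact congrArg Sum.inl (AA v w x hx hy)
      · exact (ACore v l x hx hy).elim
      · exact (ACore w k x hy hx).elim
      · exact congrArg Sum.inr (CoreCore k l x hx hy)
    · intro d
      exact arcC d _ _ (by linarith [(αb d).1]) (by linarith [(αb d).2])
    · intro d
      exact arcP d _ _ (by linarith [(αb d).1]) (by linarith [(αb d).2])
    · intro d d' x hx hx'
      obtain ⟨t, ht, rfl⟩ := (memC d x).1 hx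
      obtain ⟨t', ht', h⟩ := (memC d' _).1 hx'
      have b1 := αb d
      have b2 := αb d'
      rcases H.meet hη (d := d) (d' := d') (t := t) (t' := t')
        ⟨by linarith [ht.1], by linarith [ht.2]⟩ ⟨by linarith [ht'.1], by linarith [ht'.2]⟩
        h.symm with h | h | h | h
      · exact h.1
      · exfalso
        have := αs d
        rw [← h.1] at this
        linarith [ht.2, ht'.2, h.2]
      · exfalso; rcases h.1 with h | h <;> linarith [ht.1, ht.2]
      · exact absurd h.2.1 (noX d t ht)
    · intro d
      exact ⟨Γ d (α d), ⟨α d, ⟨le_rfl, by linarith⟩, rfl⟩,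
        (memAt _ _).2 (Or.inr ⟨d, rfl, α d, ⟨by linarith [(αb d).1], le_rfl⟩, rfl⟩)⟩
    · intro d
      exact ⟨Γ d (α d + η), ⟨α d + η, ⟨by linarith, le_rfl⟩, rfl⟩,
        (memCore _ _).2 ⟨d, rfl, α d + η, ⟨le_rfl, by linarith [αs d]⟩, rfl⟩⟩
    · intro d i x hx hi
      obtain ⟨t, ht, rfl⟩ := (memC d x).1 hx
      have b1 := αb d
      have p1 : 0 < t := by linarith [ht.1]
      have p2 : t < 1 := by linarith [ht.2]
      rcases i with v | k
      · left
        rcases (memAt v _).1 hi with h | ⟨d', rfl, t', ht', h⟩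
        · exact absurd h (posΓ d t v p1 p2)
        have b2 := αb d'
        rcases H.meet hη (d := d) (d' := d') (t := t) (t' := t') ⟨p1.le, p2.le⟩
          ⟨ht'.1, by linarith [ht'.2]⟩ h.symm with h | h | h | h
        · rw [h.1]
        · exfalso
          have := αs d
          rw [← h.1] at this
          linarith [ht.2, ht'.2, h.2]
        · exfalso; rcases h.1 with h | h <;> linarith
        · exact absurd h.2.1 (noX d t ht)
      · right
        obtain ⟨d', rfl, t', ht', h⟩ := (memCore k _).1 hi
        have b2 := αb d'
        have b3 := αb d'.symm
        rcases H.meet hη (d := d) (d' := d') (t := t) (t' := t') ⟨p1.le, p2.le⟩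
          ⟨by linarith [ht'.1], by linarith [ht'.2]⟩ h.symm with h | h | h | h
        · rw [h.1]
        · rw [h.1, κsymm]
        · exfalso; rcases h.1 with h | h <;> linarith
        · exact absurd h.2.1 (noX d t ht)
  obtain ⟨N, s, ρ, h, hm⟩ := this
  exact ⟨N, s, ρ, h, hm, Quotient.mk_surjective, κsymm, κcl⟩

end

/-! ### Discharging -/

/-- The combinatorial data on which the discharging argument runs: a plane map whose edges are the
darts of a simple graph, with reversal `sym` and the colour `c` of the initial vertex in a proper
2-colouring. A class of `κ` consists of the darts of one edge or of two edges (`cls`) and has no two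
darts with the same initial vertex (`fst_κ`). All degrees are at least 4. -/
structure CrossMap {D V K F : Type*} [Fintype D] [Fintype V] [Fintype K] [DecidableEq F]
    [DecidableEq V] (fst : D → V) (κ : D → K) (s ρ : D → D) (h : D → F) (sym : D → D)
    (c : D → Bool) : Prop extends PlaneMap fst κ s ρ h where
  sym_sym : ∀ d, sym (sym d) = d
  c_sym : ∀ d, c (sym d) = !c d
  c_fst : ∀ a b, fst a = fst b → c a = c b
  simple : ∀ a b, fst a = fst b → fst (sym a) = fst (sym b) → a = b
  fst_κ : ∀ a b, fst a = fst b → κ a = κ b → a = b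
  κ_sym : ∀ d, κ (sym d) = κ d
  κ_surj : Function.Surjective κ
  cls : ∀ d e e', κ e = κ d → κ e' = κ d → e ≠ d → e ≠ sym d → e' ≠ d → e' ≠ sym d →
    e' = e ∨ e' = sym e
  deg : ∀ v, 4 ≤ (Finset.univ.filter (fun d => fst d = v)).card

namespace CrossMap

section
variable {D V K F : Type*} [Fintype D] [Fintype V] [Fintype K] [DecidableEq F]
    [DecidableEq V] {fst : D → V} {κ : D → K} {s ρ : D → D} {h : D → F} {sym : D → D}
    {c : D → Bool}

/-- The edge of `d` is crossed, that is, its class contains a further edge. -/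
def Crossed (κ : D → K) (sym : D → D) (d : D) : Prop := ∃ e, κ e = κ d ∧ e ≠ d ∧ e ≠ sym d

/-- The face walk along `d` turns at a crossing and leads to a vertex of the opposite colour. -/
def Bi (κ : D → K) (ρ sym : D → D) (c : D → Bool) (d : D) : Prop :=
  Crossed κ sym d ∧ ρ d ≠ sym d ∧ c (ρ d) ≠ c d

/-- The face walk along `d` turns at a crossing and leads to a vertex of the same colour. -/
def Mono (κ : D → K) (ρ sym : D → D) (c : D → Bool) (d : D) : Prop :=
  Crossed κ sym d ∧ ρ d ≠ sym d ∧ c (ρ d) = c d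

open Classical in
/-- The weight of a dart: 6 if uncrossed, 12 at a bichromatic turn, 9 for the other crossed darts. -/
noncomputable def wt (κ : D → K) (ρ sym : D → D) (c : D → Bool) (d : D) : ℕ :=
  (if Crossed κ sym d then 9 else 6) + (if Bi κ ρ sym c d then 3 else 0)

open Classical in
/-- The weight of the face of `d` exceeds 18 by at least its number of darts. -/
def Special (κ : D → K) (ρ : D → D) (h : D → F) (sym : D → D) (c : D → Bool) (d : D) : Prop :=
  18 + (Finset.univ.filter (fun e => h e = h d)).card ≤
    ∑ e ∈ Finset.univ.filter (fun e => h e = h d), wt κ ρ sym c e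

/-- The dart `d` and its successor along the face have one of the type patterns found on a digon of
weight exactly 18, namely `6 + 12`, `12 + 6` or `9 + 9`. -/
def Normal (κ : D → K) (s ρ sym : D → D) (c : D → Bool) (d : D) : Prop :=
  (¬ Crossed κ sym d ∧ Bi κ ρ sym c (s (ρ d))) ∨ (Bi κ ρ sym c d ∧ ¬ Crossed κ sym (s (ρ d))) ∨
    (Mono κ ρ sym c d ∧ Mono κ ρ sym c (s (ρ d)))

theorem six_le_wt (d : D) : 6 ≤ wt κ ρ sym c d := by
  unfold wt; split_ifs <;> omega

theorem wt_mono {d : D} (hd : Mono κ ρ sym c d) : wt κ ρ sym c d = 9 := by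
  have : ¬ Bi κ ρ sym c d := fun h => h.2.2 hd.2.2
  simp [wt, hd.1, this]

theorem wt_bi {d : D} (hd : Bi κ ρ sym c d) : wt κ ρ sym c d = 12 := by
  simp [wt, hd.1, hd]

open Classical in
theorem weight_sum : ∑ d, wt κ ρ sym c d = 9 * (Finset.univ.filter (Crossed κ sym)).card +
    6 * (Finset.univ.filter (fun d => ¬ Crossed κ sym d)).card +
    3 * (Finset.univ.filter (Bi κ ρ sym c)).card := by
  unfold wt
  rw [Finset.sum_add_distrib, Finset.sum_ite, Finset.sum_ite]
  simp [mul_comm]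

theorem sym_ne (M : CrossMap fst κ s ρ h sym c) (d : D) : sym d ≠ d := by
  intro hd
  have := M.c_sym d
  rw [hd] at this
  cases hc : c d <;> simp [hc] at this

theorem s_ne (M : CrossMap fst κ s ρ h sym c) (d : D) : s d ≠ d := by
  intro hd
  have h1 : ∀ b, fst b = fst d → b = d := fun b hb =>
    M.s_trans d b hb.symm (fun x => x = d) (fun x hx => by rw [hx, hd]) rfl
  have h2 := M.deg (fst d)
  have h3 : (Finset.univ.filter (fun e => fst e = fst d)).card ≤ 1 :=
    Finset.card_le_one.2 fun a ha b hb => by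
      rw [h1 a (by simpa using ha), h1 b (by simpa using hb)]
  omega

theorem ρ_ne (M : CrossMap fst κ s ρ h sym c) (d : D) : ρ d ≠ d := by
  intro hd
  exact M.sym_ne d (M.ρ_trans d (sym d) (M.κ_sym d).symm (fun x => x = d)
    (fun x hx => by rw [hx, hd]) rfl)

theorem crossed_congr (M : CrossMap fst κ s ρ h sym c) {a b : D} (hab : κ a = κ b) (ha : Crossed κ sym a) : Crossed κ sym b := by
  by_contra hb
  have hB : ∀ e, κ e = κ b → e = b ∨ e = sym b := by
    intro e he
    by_contra hne
    push Not at hne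
    exact hb ⟨e, he, hne.1, hne.2⟩
  obtain ⟨e, he, h1, h2⟩ := ha
  have := M.sym_sym b
  rcases hB a hab with h3 | h3 <;> rcases hB e (he.trans hab) with h4 | h4 <;> subst h3 <;>
    simp_all

theorem ρ_of_not_crossed (M : CrossMap fst κ s ρ h sym c) {d : D} (hd : ¬ Crossed κ sym d) : ρ d = sym d := by
  by_contra hne
  exact hd ⟨ρ d, M.κ_ρ d, M.ρ_ne d, hne⟩

theorem ρρ_ne (M : CrossMap fst κ s ρ h sym c) {d : D} (hd : Crossed κ sym d) : ρ (ρ d) ≠ d := by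
  intro h2
  have key : ∀ b, κ b = κ d → b = d ∨ b = ρ d := fun b hb =>
    M.ρ_trans d b hb.symm (fun x => x = d ∨ x = ρ d)
      (by rintro x (rfl | rfl)
          · exact Or.inr rfl
          · exact Or.inl h2) (Or.inl rfl)
  obtain ⟨e, he, h3, h4⟩ := hd
  have h5 := (key e he).resolve_left h3
  have h6 := (key (sym d) (M.κ_sym d)).resolve_left (M.sym_ne d)
  exact h4 (h5.trans h6.symm)

theorem fst_ρ_ne (M : CrossMap fst κ s ρ h sym c) (d : D) : fst (ρ d) ≠ fst d := fun hd =>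
  M.ρ_ne d (M.fst_κ _ _ hd (M.κ_ρ d))

theorem c_next (M : CrossMap fst κ s ρ h sym c) (d : D) : c (s (ρ d)) = c (ρ d) := M.c_fst _ _ (M.v_s _)

theorem next_ne (M : CrossMap fst κ s ρ h sym c) (d : D) : s (ρ d) ≠ d := fun hd =>
  M.fst_ρ_ne d (by rw [← M.v_s (ρ d), hd])

theorem c_of_ρ_eq (M : CrossMap fst κ s ρ h sym c) {d : D} (hd : ρ d = sym d) : c (ρ d) ≠ c d := by
  rw [hd, M.c_sym]
  simp

theorem mono_of_c_eq (M : CrossMap fst κ s ρ h sym c) {d : D} (hd : c (ρ d) = c d) : Mono κ ρ sym c d := by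
  refine ⟨?_, fun h => M.c_of_ρ_eq h hd, hd⟩
  by_contra h
  exact M.c_of_ρ_eq (M.ρ_of_not_crossed h) hd

theorem not_bi_ρ (M : CrossMap fst κ s ρ h sym c) {d : D} (hd : Bi κ ρ sym c d) : ¬ Bi κ ρ sym c (ρ d) := by
  intro hb
  have e1 : κ (ρ (ρ d)) = κ d := by rw [M.κ_ρ, M.κ_ρ]
  have e2 : ρ (ρ d) = sym d := by
    by_contra hne
    rcases M.cls d (ρ d) (ρ (ρ d)) (M.κ_ρ d) e1 (M.ρ_ne d) hd.2.1 (M.ρρ_ne hd.1) hne with h | h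
    · exact M.ρ_ne _ h
    · exact hb.2.1 h
  have h1 := hb.2.2
  have h2 := hd.2.2
  rw [e2, M.c_sym] at h1
  revert h1 h2
  cases c d <;> cases c (ρ d) <;> simp

/-- Around a crossing bichromatic and monochromatic turns alternate. -/
theorem alternate (M : CrossMap fst κ s ρ h sym c) {y z : D} (hz : ρ z = y) (hy : Crossed κ sym y) (h1 : ρ z ≠ sym z)
    (h2 : ρ y ≠ sym y) : c (ρ y) ≠ c y ↔ c (ρ z) = c z := by
  subst hz
  have n1 : z ≠ ρ z := (M.ρ_ne z).symm
  have n2 : z ≠ sym (ρ z) := by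
    intro h; apply h1; conv_rhs => rw [h]
    rw [M.sym_sym]
  have hzc : Crossed κ sym z := M.crossed_congr (M.κ_ρ z) hy
  have n3 := M.ρρ_ne hzc
  rcases M.cls (ρ z) z (ρ (ρ z)) (M.κ_ρ z).symm (M.κ_ρ _) n1 n2 (M.ρ_ne _) h2 with h | h
  · exact absurd h n3
  · rw [h, M.c_sym]
    cases c z <;> cases c (ρ z) <;> simp

/-- A digon with two straight darts would be bounded by two parallel edges. -/
theorem not_both_straight (M : CrossMap fst κ s ρ h sym c) {d : D} (h1 : ρ d = sym d) (h2 : ρ (s (ρ d)) = sym (s (ρ d)))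
    (h3 : s (ρ (s (ρ d))) = d) : False := by
  have a1 : fst (s (ρ d)) = fst (sym d) := by rw [M.v_s, h1]
  have a2 : fst (sym (s (ρ d))) = fst (sym (sym d)) := by
    rw [← h2, M.sym_sym, ← M.v_s, h3]
  have := M.simple _ _ a1 a2
  rw [h1] at this
  exact M.s_ne _ this

theorem next_inj (M : CrossMap fst κ s ρ h sym c) : Function.Injective (fun d => s (ρ d)) := M.s_inj.comp M.ρ_inj

/-- The four types of darts, by what the face walk does at the far end of the dart in `K`. -/
theorem turn_cases (M : CrossMap fst κ s ρ h sym c) (d : D) : (¬ Crossed κ sym d ∧ ρ d = sym d ∧ wt κ ρ sym c d = 6) ∨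
    (ρ d = sym d ∧ wt κ ρ sym c d = 9) ∨ Bi κ ρ sym c d ∨ Mono κ ρ sym c d := by
  by_cases hX : Crossed κ sym d
  · by_cases h2 : ρ d = sym d
    · right; left
      have : ¬ Bi κ ρ sym c d := fun h => h.2.1 h2
      exact ⟨h2, by simp [wt, hX, this]⟩
    · by_cases h3 : c (ρ d) = c d
      · exact Or.inr (Or.inr (Or.inr ⟨hX, h2, h3⟩))
      · exact Or.inr (Or.inr (Or.inl ⟨hX, h2, h3⟩))
  · left
    have : ¬ Bi κ ρ sym c d := fun h => hX h.1
    exact ⟨hX, M.ρ_of_not_crossed hX, by simp [wt, hX, this]⟩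

open Classical in
/-- The weight of a face is at least 18. It exceeds 18 by the number of darts unless the face is a
normal digon. A face with at least 4 darts is heavy because of the minimum weight 6, and in a face
with 3 darts the colours cannot change at every step, so that some turn is monochromatic. -/
theorem face_weight (M : CrossMap fst κ s ρ h sym c) (d : D) : Special κ ρ h sym c d ∨
    (18 ≤ ∑ e ∈ Finset.univ.filter (fun e => h e = h d), wt κ ρ sym c e ∧
      Normal κ s ρ sym c d) := by
  unfold Special
  set C := Finset.univ.filter (fun e => h e = h d) with hC
  have memC : ∀ e, e ∈ C ↔ h e = h d := by simp [hC]
  have dC : d ∈ C := (memC d).2 rfl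
  have next : ∀ e ∈ C, s (ρ e) ∈ C := fun e he =>
    (memC _).2 ((M.face e).trans ((memC e).1 he))
  have ninj := M.next_inj
  have six : 6 * C.card ≤ ∑ e ∈ C, wt κ ρ sym c e := by
    rw [mul_comm, ← smul_eq_mul]
    exact Finset.card_nsmul_le_sum _ _ _ fun e _ => six_le_wt e
  have n1 := M.next_ne d
  have n2 := M.next_ne (s (ρ d))
  have c1 := next d dC
  have c2 := next _ c1
  have pair : ({d, s (ρ d)} : Finset D) ⊆ C := by
    intro e he; simp at he; rcases he with rfl | rfl <;> assumption
  have two : ({d, s (ρ d)} : Finset D).card = 2 := Finset.card_pair n1.symm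
  have k2 : 2 ≤ C.card := two ▸ Finset.card_le_card pair
  rcases Nat.lt_or_ge C.card 4 with k4 | k4
  swap
  · left; omega
  by_cases hback : s (ρ (s (ρ d))) = d
  · have CE : C = {d, s (ρ d)} := by
      by_contra hne
      have hss : ({d, s (ρ d)} : Finset D) ⊂ C := lt_of_le_of_ne pair (Ne.symm hne)
      obtain ⟨e, heC, he⟩ := Finset.exists_of_ssubset hss
      have he' : e ≠ d ∧ e ≠ s (ρ d) := by simpa using he
      have f1 := M.next_ne e
      have f2 : s (ρ e) ≠ s (ρ d) := fun h => he'.1 (ninj h)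
      have f3 : s (ρ e) ≠ d := fun h => he'.2 (ninj (h.trans hback.symm))
      have : ({s (ρ e), e, d, s (ρ d)} : Finset D) ⊆ C := by
        intro x hx; simp at hx
        rcases hx with rfl | rfl | rfl | rfl
        · exact next _ heC
        all_goals assumption
      have h4 : ({s (ρ e), e, d, s (ρ d)} : Finset D).card = 4 := by
        rw [Finset.card_insert_of_notMem, Finset.card_insert_of_notMem he, two]
        simp [f1, f2, f3]
      have := Finset.card_le_card this
      omega
    have cc1 := M.c_next d
    have cc2 := M.c_next (s (ρ d))
    rw [hback] at cc2
    rw [CE, two, Finset.sum_pair n1.symm]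
    have nb := fun h1 h2 => M.not_both_straight (d := d) h1 h2 hback
    have par : c (ρ d) = c d ↔ c (ρ (s (ρ d))) = c (s (ρ d)) := by
      rw [← cc2, cc1, eq_comm]
    rcases M.turn_cases d with ⟨x1, y1, z1⟩ | ⟨y1, z1⟩ | b1 | m1 <;>
    rcases M.turn_cases (s (ρ d)) with ⟨x2, y2, z2⟩ | ⟨y2, z2⟩ | b2 | m2
    · exact (nb y1 y2).elim
    · exact (nb y1 y2).elim
    · right; rw [z1, wt_bi b2]; exact ⟨by norm_num, Or.inl ⟨x1, b2⟩⟩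
    · exact (M.c_of_ρ_eq y1 (par.2 m2.2.2)).elim
    · exact (nb y1 y2).elim
    · exact (nb y1 y2).elim
    · left; rw [z1, wt_bi b2]; norm_num
    · exact (M.c_of_ρ_eq y1 (par.2 m2.2.2)).elim
    · right; rw [z2, wt_bi b1]; exact ⟨by norm_num, Or.inr (Or.inl ⟨b1, x2⟩)⟩
    · left; rw [z2, wt_bi b1]; norm_num
    · left; rw [wt_bi b2, wt_bi b1]; norm_num
    · exact (b1.2.2 (par.2 m2.2.2)).elim
    · exact (M.c_of_ρ_eq y2 (par.1 m1.2.2)).elim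
    · exact (M.c_of_ρ_eq y2 (par.1 m1.2.2)).elim
    · exact (b2.2.2 (par.1 m1.2.2)).elim
    · right; rw [wt_mono m1, wt_mono m2]; exact ⟨by norm_num, Or.inr (Or.inr ⟨m1, m2⟩)⟩
  · left
    set d1 := s (ρ d) with hd1
    set d2 := s (ρ d1) with hd2
    have tri : ({d, d1, d2} : Finset D) ⊆ C := by
      intro e he; simp at he; rcases he with rfl | rfl | rfl <;> assumption
    have three : ({d, d1, d2} : Finset D).card = 3 :=
      Finset.card_eq_three.2 ⟨d, d1, d2, n1.symm, Ne.symm hback, n2.symm, rfl⟩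
    have CE : C = {d, d1, d2} :=
      (Finset.eq_of_subset_of_card_le tri (by omega)).symm
    have c3 := next _ c2
    have ret : s (ρ d2) = d := by
      rw [CE] at c3
      simp only [Finset.mem_insert, Finset.mem_singleton] at c3
      rcases c3 with h | h | h
      · exact h
      · exact (hback (ninj h)).elim
      · exact (M.next_ne _ h).elim
    have q1 := M.c_next d
    have q2 := M.c_next d1
    have q3 := M.c_next d2
    rw [ret] at q3
    rw [← hd1] at q1
    rw [← hd2] at q2
    have hm : Mono κ ρ sym c d ∨ Mono κ ρ sym c d1 ∨ Mono κ ρ sym c d2 := by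
      by_contra hno
      push Not at hno
      have r1 : c (ρ d) ≠ c d := fun h => hno.1 (M.mono_of_c_eq h)
      have r2 : c (ρ d1) ≠ c d1 := fun h => hno.2.1 (M.mono_of_c_eq h)
      have r3 : c (ρ d2) ≠ c d2 := fun h => hno.2.2 (M.mono_of_c_eq h)
      rw [← q1] at r1
      rw [← q2] at r2
      rw [← q3] at r3
      revert r1 r2 r3
      cases c d <;> cases c d1 <;> cases c d2 <;> simp
    rw [CE, three, Finset.sum_insert (by simp [n1.symm, Ne.symm hback]), Finset.sum_pair n2.symm]
    have g0 := six_le_wt (κ := κ) (ρ := ρ) (sym := sym) (c := c) d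
    have g1 := six_le_wt (κ := κ) (ρ := ρ) (sym := sym) (c := c) d1
    have g2 := six_le_wt (κ := κ) (ρ := ρ) (sym := sym) (c := c) d2
    rcases hm with h | h | h <;> have := wt_mono h <;> omega

open Classical in
/-- The sum of the face weights. -/
theorem weight_lower (M : CrossMap fst κ s ρ h sym c) : 18 * (Finset.univ.image h).card +
    (Finset.univ.filter (Special κ ρ h sym c)).card ≤ ∑ d, wt κ ρ sym c d := by
  have e1 : ∑ d, wt κ ρ sym c d =
      ∑ f ∈ Finset.univ.image h, ∑ d ∈ Finset.univ.filter (fun d => h d = f), wt κ ρ sym c d :=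
    (Finset.sum_fiberwise_of_maps_to (fun d _ => Finset.mem_image_of_mem h (Finset.mem_univ d))
      _).symm
  have e2 : (Finset.univ.filter (Special κ ρ h sym c)).card =
      ∑ f ∈ Finset.univ.image h,
        ((Finset.univ.filter (Special κ ρ h sym c)).filter (fun d => h d = f)).card :=
    Finset.card_eq_sum_card_fiberwise
      (fun d _ => Finset.mem_coe.2 (Finset.mem_image_of_mem h (Finset.mem_univ d)))
  rw [e1, e2, mul_comm, ← smul_eq_mul, ← Finset.sum_const, ← Finset.sum_add_distrib]
  apply Finset.sum_le_sum
  intro f hf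
  obtain ⟨d, -, rfl⟩ := Finset.mem_image.1 hf
  by_cases hd : Special κ ρ h sym c d
  · refine le_trans ?_ hd
    gcongr
    exact Finset.subset_univ _
  · have : ((Finset.univ.filter (Special κ ρ h sym c)).filter (fun e => h e = h d)) = ∅ := by
      apply Finset.filter_eq_empty_iff.2
      intro e he heq
      apply hd
      have := (Finset.mem_filter.1 he).2
      unfold Special at this ⊢
      rwa [heq] at this
    rw [this]
    exact ((M.face_weight d).resolve_left hd).1

open Classical in
/-- At most half of the crossed darts turn bichromatically, since no two consecutive ones do. -/
theorem bi_count (M : CrossMap fst κ s ρ h sym c) : 2 * (Finset.univ.filter (Bi κ ρ sym c)).card ≤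
    (Finset.univ.filter (Crossed κ sym)).card := by
  set B := Finset.univ.filter (Bi κ ρ sym c) with hB
  have h1 : (B.image ρ).card = B.card := Finset.card_image_of_injective _ M.ρ_inj
  have h2 : Disjoint B (B.image ρ) := by
    rw [Finset.disjoint_left]
    intro x hx hx'
    obtain ⟨y, hy, rfl⟩ := Finset.mem_image.1 hx'
    exact M.not_bi_ρ (Finset.mem_filter.1 hy).2 (Finset.mem_filter.1 hx).2
  have h3 : B ∪ B.image ρ ⊆ Finset.univ.filter (Crossed κ sym) := by
    intro x hx
    refine Finset.mem_filter.2 ⟨Finset.mem_univ _, ?_⟩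
    rcases Finset.mem_union.1 hx with hx | hx
    · exact (Finset.mem_filter.1 hx).2.1
    · obtain ⟨y, hy, rfl⟩ := Finset.mem_image.1 hx
      exact M.crossed_congr (M.κ_ρ y).symm (Finset.mem_filter.1 hy).2.1
  have h4 := Finset.card_le_card h3
  rw [Finset.card_union_of_disjoint h2, h1] at h4
  omega

open Classical in
/-- A class has 4 darts if it is a crossing and 2 otherwise. -/
theorem class_count (M : CrossMap fst κ s ρ h sym c) : 4 * Fintype.card K ≤ (Finset.univ.filter (Crossed κ sym)).card +
    2 * (Finset.univ.filter (fun d => ¬ Crossed κ sym d)).card := by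
  have e1 : (Finset.univ.filter (Crossed κ sym)).card +
      2 * (Finset.univ.filter (fun d => ¬ Crossed κ sym d)).card =
      ∑ d, (if Crossed κ sym d then 1 else 2) := by
    rw [Finset.sum_ite]; simp [mul_comm]
  rw [e1, ← Finset.sum_fiberwise (s := Finset.univ) (g := κ), mul_comm, ← smul_eq_mul,
    Fintype.card, ← Finset.sum_const]
  apply Finset.sum_le_sum
  intro k _
  obtain ⟨d, rfl⟩ := M.κ_surj k
  by_cases hd : Crossed κ sym d
  · obtain ⟨e, he, n1, n2⟩ := id hd
    have n3 : sym e ≠ d := fun h => n2 (by rw [← h, M.sym_sym])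
    have n4 : sym e ≠ sym d := fun h => n1 (by rw [← M.sym_sym e, h, M.sym_sym])
    have hsub : ({d, sym d, e, sym e} : Finset D) ⊆ Finset.univ.filter (fun x => κ x = κ d) := by
      intro x hx; simp at hx
      rcases hx with rfl | rfl | rfl | rfl <;> simp [M.κ_sym, he]
    have hc : ({d, sym d, e, sym e} : Finset D).card = 4 := by
      rw [Finset.card_insert_of_notMem, Finset.card_insert_of_notMem, Finset.card_pair]
      · exact (M.sym_ne e).symm
      · simp [n2.symm, n4.symm]
      · simp [(M.sym_ne d).symm, n1.symm, n3.symm]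
    calc 4 = ∑ x ∈ ({d, sym d, e, sym e} : Finset D), 1 := by rw [← hc]; simp
      _ ≤ ∑ x ∈ Finset.univ.filter (fun x => κ x = κ d), 1 :=
          Finset.sum_le_sum_of_subset hsub
      _ ≤ _ := Finset.sum_le_sum fun x _ => by split_ifs <;> omega
  · have hsub : ({d, sym d} : Finset D) ⊆ Finset.univ.filter (fun x => κ x = κ d) := by
      intro x hx; simp at hx
      rcases hx with rfl | rfl <;> simp [M.κ_sym]
    calc 4 = ∑ x ∈ ({d, sym d} : Finset D), 2 := by
            rw [Finset.sum_pair (M.sym_ne d).symm]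
      _ ≤ ∑ x ∈ Finset.univ.filter (fun x => κ x = κ d), 2 :=
          Finset.sum_le_sum_of_subset hsub
      _ ≤ _ := Finset.sum_le_sum fun x hx => by
          rw [if_neg fun h => hd (M.crossed_congr (Finset.mem_filter.1 hx).2 h)]

/-- If all faces around the initial vertex of `x` are normal, the types of the darts there follow the
cyclic pattern uncrossed, bichromatic, monochromatic. -/
theorem normal_step (M : CrossMap fst κ s ρ h sym c) {x : D} (hx : ∀ y, fst y = fst x → Normal κ s ρ sym c y)
    (hx' : ∀ e, ρ e = x → Normal κ s ρ sym c e) :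
    (¬ Crossed κ sym x → Bi κ ρ sym c (s x)) ∧ (Bi κ ρ sym c x → Mono κ ρ sym c (s x)) ∧
      (Mono κ ρ sym c x → ¬ Crossed κ sym (s x)) := by
  obtain ⟨e, rfl⟩ := Finite.surjective_of_injective M.ρ_inj x
  have he := hx' e rfl
  have key : ∀ y, Normal κ s ρ sym c y → Crossed κ sym y → ρ y ≠ sym y := by
    rintro y (h | h | h) hy
    · exact absurd hy h.1
    · exact h.1.2.1
    · exact h.1.2.1
  have hρ := hx _ rfl
  refine ⟨fun h => ?_, fun h => ?_, fun h => ?_⟩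
  · have h' : ¬ Crossed κ sym e := fun h'' => h (M.crossed_congr (M.κ_ρ e).symm h'')
    rcases he with h1 | h1 | h1
    · exact h1.2
    · exact absurd h1.1.1 h'
    · exact absurd h1.1.1 h'
  · have hc := M.crossed_congr (M.κ_ρ e) h.1
    have := (M.alternate rfl h.1 (key e he hc) h.2.1).1 h.2.2
    rcases he with h1 | h1 | h1
    · exact absurd hc h1.1
    · exact absurd this h1.1.2.2
    · exact h1.2
  · have hc := M.crossed_congr (M.κ_ρ e) h.1
    have := mt (M.alternate rfl h.1 (key e he hc) h.2.1).2 (fun hh => hh h.2.2)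
    rcases he with h1 | h1 | h1
    · exact absurd hc h1.1
    · exact h1.2
    · exact absurd h1.1.2.2 this

open Classical in
/-- A vertex with only normal faces has degree divisible by 3, so the lower bound 4 improves to 6. -/
theorem six_le_deg (M : CrossMap fst κ s ρ h sym c) {v : V} (hv : ∀ y, fst y = v → Normal κ s ρ sym c y)
    (hv' : ∀ e, fst (ρ e) = v → Normal κ s ρ sym c e) :
    6 ≤ (Finset.univ.filter (fun d => fst d = v)).card := by
  set A := Finset.univ.filter (fun d => fst d = v ∧ ¬ Crossed κ sym d) with hA
  set B := Finset.univ.filter (fun d => fst d = v ∧ Bi κ ρ sym c d) with hB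
  set C := Finset.univ.filter (fun d => fst d = v ∧ Mono κ ρ sym c d) with hC
  have step : ∀ x, fst x = v → (¬ Crossed κ sym x → Bi κ ρ sym c (s x)) ∧
      (Bi κ ρ sym c x → Mono κ ρ sym c (s x)) ∧ (Mono κ ρ sym c x → ¬ Crossed κ sym (s x)) := by
    rintro x rfl
    exact M.normal_step hv fun e he => hv' e (by rw [he])
  have AB : A.card ≤ B.card := Finset.card_le_card_of_injOn s (by
    intro x hx
    simp only [hA, hB, Finset.coe_filter, Finset.mem_univ, true_and, mem_ofPred_eq] at hx ⊢
    exact ⟨(M.v_s x).trans hx.1, (step x hx.1).1 hx.2⟩) (M.s_inj.injOn)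
  have BC : B.card ≤ C.card := Finset.card_le_card_of_injOn s (by
    intro x hx
    simp only [hC, hB, Finset.coe_filter, Finset.mem_univ, true_and, mem_ofPred_eq] at hx ⊢
    exact ⟨(M.v_s x).trans hx.1, (step x hx.1).2.1 hx.2⟩) (M.s_inj.injOn)
  have CA : C.card ≤ A.card := Finset.card_le_card_of_injOn s (by
    intro x hx
    simp only [hC, hA, Finset.coe_filter, Finset.mem_univ, true_and, mem_ofPred_eq] at hx ⊢
    exact ⟨(M.v_s x).trans hx.1, (step x hx.1).2.2 hx.2⟩) (M.s_inj.injOn)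
  have dAB : Disjoint A B := by
    rw [Finset.disjoint_left]; intro x hx hx'
    exact (Finset.mem_filter.1 hx).2.2 (Finset.mem_filter.1 hx').2.2.1
  have dABC : Disjoint (A ∪ B) C := by
    rw [Finset.disjoint_left]; intro x hx hx'
    have := (Finset.mem_filter.1 hx').2.2
    rcases Finset.mem_union.1 hx with hx | hx
    · exact (Finset.mem_filter.1 hx).2.2 this.1
    · exact (Finset.mem_filter.1 hx).2.2.2.2 this.2.2
  have hU : Finset.univ.filter (fun d => fst d = v) = A ∪ B ∪ C := by
    ext x
    simp only [hA, hB, hC, Finset.mem_filter, Finset.mem_univ, true_and, Finset.mem_union]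
    constructor
    · intro hx
      rcases hv x hx with h | h | h
      · exact Or.inl (Or.inl ⟨hx, h.1⟩)
      · exact Or.inl (Or.inr ⟨hx, h.1⟩)
      · exact Or.inr ⟨hx, h.1⟩
    · rintro ((h | h) | h) <;> exact h.1
  have h4 := M.deg v
  rw [hU, Finset.card_union_of_disjoint dABC, Finset.card_union_of_disjoint dAB] at h4 ⊢
  omega

open Classical in
/-- A vertex of degree less than 6 has degree at least 4 and is the initial vertex of a dart with
a heavy face, which makes up for the missing 2. -/
theorem vertex_count (M : CrossMap fst κ s ρ h sym c) : 6 * Fintype.card V ≤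
    Fintype.card D + 2 * (Finset.univ.filter (Special κ ρ h sym c)).card := by
  have e1 : Fintype.card D = ∑ v : V, (Finset.univ.filter (fun d => fst d = v)).card :=
    Finset.card_eq_sum_card_fiberwise (f := fst) (fun d _ => Finset.mem_coe.2 (Finset.mem_univ _))
  have e2 : (Finset.univ.filter (Special κ ρ h sym c)).card = ∑ v : V,
      ((Finset.univ.filter (Special κ ρ h sym c)).filter (fun d => fst d = v)).card :=
    Finset.card_eq_sum_card_fiberwise (f := fst) (fun d _ => Finset.mem_coe.2 (Finset.mem_univ _))
  rw [e1, e2, mul_comm, ← smul_eq_mul, Fintype.card, ← Finset.sum_const, Finset.mul_sum,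
    ← Finset.sum_add_distrib]
  apply Finset.sum_le_sum
  intro v _
  by_cases hs : ∃ x, fst x = v ∧ Special κ ρ h sym c x
  · obtain ⟨x, hx, hx'⟩ := hs
    have h4 := M.deg v
    have : 0 < ((Finset.univ.filter (Special κ ρ h sym c)).filter (fun d => fst d = v)).card :=
      Finset.card_pos.2 ⟨x, by simp [hx, hx']⟩
    omega
  · push Not at hs
    have h1 : ∀ y, fst y = v → Normal κ s ρ sym c y := fun y hy =>
      ((M.face_weight y).resolve_left (hs y hy)).2
    have h2 : ∀ e, fst (ρ e) = v → Normal κ s ρ sym c e := by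
      intro e he
      refine ((M.face_weight e).resolve_left fun hsp => hs (s (ρ e)) ((M.v_s _).trans he) ?_).2
      unfold Special at hsp ⊢
      rwa [M.face e]
    have := M.six_le_deg h1 h2
    omega

/-- Twice `weight_lower`, with `bi_count` and `class_count`, gives
`36 (|F| + |K|) + 2 S ≤ 30 |D|`, where `S` is the number of darts on heavy faces; Euler's inequality
and `vertex_count` eliminate `|F| + |K|` and `S`. -/
theorem bound (M : CrossMap fst κ s ρ h sym c) : 5 * Fintype.card D + 72 ≤ 30 * Fintype.card V := by
  classical
  have h1 := M.weight_lower
  have h2 := M.bi_count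
  have h3 := weight_sum (κ := κ) (ρ := ρ) (sym := sym) (c := c)
  have h4 := M.class_count
  have h5 := M.vertex_count
  have h6 := M.euler
  have h7 : (Finset.univ.filter (Crossed κ sym)).card +
      (Finset.univ.filter (fun d => ¬ Crossed κ sym d)).card = Fintype.card D :=
    Finset.card_filter_add_card_filter_not _
  omega

end
end CrossMap

/-! ### Restriction to subgraphs and induction -/

universe w

/-- Restriction of a drawing along an embedding of graphs. -/
def Drawing.restrict {V W : Type*} {G : SimpleGraph V} {H : SimpleGraph W} (D : Drawing G)
    (f : H ↪g G) : Drawing H where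
  pos w := D.pos (f w)
  pos_inj := D.pos_inj.comp f.injective
  curve e := D.curve (f.mapEdgeSet e)
  curve_cont e := D.curve_cont _
  curve_inj e := D.curve_inj _
  curve_ends := by
    rintro ⟨e, he⟩
    induction e using Sym2.ind with
    | _ x y =>
      obtain ⟨a, b, hab, h0, h1⟩ := D.curve_ends (f.mapEdgeSet ⟨s(x, y), he⟩)
      have hab' : s(f x, f y) = s(a, b) := hab
      rcases Sym2.eq_iff.1 hab' with ⟨rfl, rfl⟩ | ⟨rfl, rfl⟩
      · exact ⟨x, y, rfl, h0, h1⟩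
      · exact ⟨y, x, Sym2.eq_swap, h0, h1⟩
  interior_no_vertex e t ht v := D.interior_no_vertex _ t ht _
  finite_meet e e' h := D.finite_meet _ _ (f.mapEdgeSet.injective.ne h)
  no_triple_point p a b c h1 h2 h3 := D.no_triple_point p _ _ _ (f.mapEdgeSet.injective.ne h1)
    (f.mapEdgeSet.injective.ne h2) (f.mapEdgeSet.injective.ne h3)

theorem SimpleGraph.AlmostPlanar.restrict {V W : Type*} {G : SimpleGraph V} {H : SimpleGraph W}
    (hG : G.AlmostPlanar) (f : H ↪g G) : H.AlmostPlanar := by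
  obtain ⟨D, hD⟩ := hG
  refine ⟨D.restrict f, fun e a b ha hb => f.mapEdgeSet.injective (hD (f.mapEdgeSet e) _ _ ?_ ?_)⟩
  · exact ⟨f.mapEdgeSet.injective.ne ha.1, ha.2⟩
  · exact ⟨f.mapEdgeSet.injective.ne hb.1, hb.2⟩

/-- The discharging bound for graphs of minimum degree at least 4; it implies `m ≤ 3 n - 8`. -/
theorem bound_of_four_le_degree {V : Type w} [Fintype V] [DecidableEq V] [Nonempty V]
    (G : SimpleGraph V) [DecidableRel G.Adj] (hbip : G.Colorable 2) (hap : G.AlmostPlanar)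
    (hdeg : ∀ v, 4 ≤ G.degree v) : 10 * G.edgeFinset.card + 72 ≤ 30 * Fintype.card V := by
  obtain ⟨D, hD⟩ := hap
  obtain ⟨Γ, H, hAP⟩ := D.exists_dartCurves hD
  have : Nonempty G.Dart := by
    obtain ⟨v⟩ := ‹Nonempty V›
    have h4 := hdeg v
    obtain ⟨x, hx⟩ := (G.degree_pos_iff_exists_adj v).1 (by omega)
    exact ⟨⟨(v, x), hx⟩⟩
  obtain ⟨K, _, κ, N, s, ρ, h, hm, κsurj, κsym, κcl⟩ := exists_planeMap H hAP
  obtain ⟨col⟩ := hbip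
  have hcol : ∀ d : G.Dart, col d.fst ≠ col d.snd := fun d => col.valid d.adj
  have M : CrossMap (fun d : G.Dart => d.fst) κ s ρ h (fun d => d.symm)
      (fun d => decide (col d.fst = 0)) :=
    { hm with
      sym_sym := fun d => d.symm_symm
      c_sym := by
        intro d
        have h1 := hcol d
        change decide (col d.snd = 0) = !decide (col d.fst = 0)
        revert h1
        generalize col d.fst = x
        generalize col d.snd = y
        revert x y
        decide
      c_fst := by
        intro a b hab
        have : a.fst = b.fst := hab
        simp only [this]
      simple := fun a b h1 h2 => SimpleGraph.Dart.ext _ _ (Prod.ext h1 h2)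
      fst_κ := by
        intro a b h1 h2
        have h1 : a.fst = b.fst := h1
        rcases κcl a with hc | ⟨x, hx, hc⟩
        · rcases hc b h2.symm with h | h
          · exact h.symm
          · rw [h] at h1; exact absurd h1 a.fst_ne_snd
        · rcases (hc b).1 h2.symm with h | h | h | h
          · exact h.symm
          · rw [h] at h1; exact absurd h1 a.fst_ne_snd
          · rw [h] at h1; exact absurd h1 hx.1
          · rw [h] at h1; exact absurd h1 hx.2.1
      κ_sym := κsym
      κ_surj := κsurj
      cls := by
        intro d e e' he he' h1 h2 h3 h4
        rcases κcl d with hc | ⟨x, hx, hc⟩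
        · rcases hc e he with h | h
          · exact absurd h h1
          · exact absurd h h2
        · have a := ((hc e).1 he).resolve_left h1 |>.resolve_left h2
          have b := ((hc e').1 he').resolve_left h3 |>.resolve_left h4
          rcases a with rfl | rfl <;> rcases b with rfl | rfl <;> simp
      deg := by
        intro v
        have := hdeg v
        rwa [← G.dart_fst_fiber_card_eq_degree] at this }
  have hb := M.bound
  rw [G.dart_card_eq_twice_card_edges] at hb
  omega

/-- Induction on the number `n + 4` of vertices, removing a vertex of degree at most 3. -/
theorem edgeFinset_bound (n : ℕ) : ∀ {V : Type w} [Fintype V] [DecidableEq V]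
    (G : SimpleGraph V) [DecidableRel G.Adj], Fintype.card V = n + 4 → G.Colorable 2 →
    G.AlmostPlanar → G.edgeFinset.card + 8 ≤ 3 * (n + 4) := by
  induction n with
  | zero =>
    intro V _ _ G _ hV hbip _
    have h := SimpleGraph.IsBipartite.four_mul_encard_edgeSet_le (G := G) hbip
    rw [← SimpleGraph.coe_edgeFinset, Set.encard_coe_eq_coe_finsetCard, ENat.card_eq_coe_fintype_card,
      hV] at h
    have h' : 4 * G.edgeFinset.card ≤ (0 + 4) ^ 2 := by exact_mod_cast h
    omega
  | succ n ih =>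
    intro V _ _ G _ hV hbip hap
    by_cases hd : ∀ v, 4 ≤ G.degree v
    · have : Nonempty V := Fintype.card_pos_iff.1 (by omega)
      have := bound_of_four_le_degree G hbip hap hd
      omega
    · push Not at hd
      obtain ⟨v, hv⟩ := hd
      have f : G.induce {v}ᶜ ↪g G := SimpleGraph.Embedding.induce _
      have h1 := ih (G.induce {v}ᶜ) (by rw [Fintype.card_compl_set]; simp [hV])
        (hbip.of_hom f.toHom) (hap.restrict f)
      rw [G.card_edgeFinset_induce_compl_singleton, G.card_edgeFinset_deleteIncidenceSet] at h1
      omega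

/-- A bipartite almost planar simple graph on `v ≥ 4` vertices has at most `3v - 8` edges. -/
theorem bipartite_almostPlanar_edge_bound {V : Type*} [Fintype V] (G : SimpleGraph V)
    (hcard : 4 ≤ Fintype.card V) (hbip : G.Colorable 2) (hap : G.AlmostPlanar) :
    G.edgeSet.ncard ≤ 3 * Fintype.card V - 8 := by
  classical
  have h := edgeFinset_bound (Fintype.card V - 4) G (by omega) hbip hap
  rw [← SimpleGraph.coe_edgeFinset, Set.ncard_coe_finset]
  omega
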